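/- For every even n = 2k ≥ 8, there exists a set P of n points in the plane in general position such that every strictly convex quadrangulation of P (a decomposition of the convex hull of P into strictly convex quadrilaterals with vertex set containing P and no point of P interior to a cell) uses at least n/4 Steiner points (vertices not in P). -/

import Mathlib

open scoped BigOperators

/-- Points in the plane. -/
abbrev Pt := ℝ × ℝ

/-- 2×2 determinant (cross product) of two plane vectors. -/
noncomputable def det2 (p q : Pt) : ℝ := p.1 * q.2 - p.2 * q.1

/-- Open half-plane strictly to the left of the directed line from `p` to `q`. -/
def Lhp (p q : Pt) : Set Pt := {x | 0 < det2 (q - p) (x - p)}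

/-- Open half-plane strictly to the right of the directed line from `p` to `q`. -/
def Rhp (p q : Pt) : Set Pt := {x | det2 (q - p) (x - p) < 0}

/-- The boundary of the polygon with vertices `v 0, …, v (n-1)`:
the union of its (cyclically consecutive) edges. -/
def polyBoundary {n : ℕ} [NeZero n] (v : Fin n → Pt) : Set Pt :=
  ⋃ i : Fin n, segment ℝ (v i) (v (i + 1))

/-- `v` describes a simple polygon: at least 3 distinct vertices, and two distinct
edges may only meet at a common endpoint. -/
def IsSimplePolygon {n : ℕ} [NeZero n] (v : Fin n → Pt) : Prop :=
  3 ≤ n ∧ Function.Injective v ∧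
    ∀ i j : Fin n, i ≠ j →
      segment ℝ (v i) (v (i + 1)) ∩ segment ℝ (v j) (v (j + 1)) ⊆
        ({v i, v (i + 1)} ∩ {v j, v (j + 1)} : Set Pt)

/-- The interior of the polygon: the union of the bounded connected components of the
complement of the boundary. -/
def polyInterior {n : ℕ} [NeZero n] (v : Fin n → Pt) : Set Pt :=
  {x | x ∉ polyBoundary v ∧
    Bornology.IsBounded (connectedComponentIn (polyBoundary v)ᶜ x)}

/-- The (closed) polygonal region: interior together with boundary. -/
def polyRegion {n : ℕ} [NeZero n] (v : Fin n → Pt) : Set Pt :=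
  polyBoundary v ∪ polyInterior v

/-- Twice the signed area of the polygon. -/
noncomputable def signedArea2 {n : ℕ} [NeZero n] (v : Fin n → Pt) : ℝ :=
  ∑ i : Fin n, det2 (v i) (v (i + 1))

/-- The vertices are listed in counterclockwise order. -/
def IsCCW {n : ℕ} [NeZero n] (v : Fin n → Pt) : Prop := 0 < signedArea2 v

/-- The vertex `v i` of a counterclockwise polygon is strictly convex
(interior angle strictly less than 180°). -/
def StrictlyConvexAt {n : ℕ} [NeZero n] (v : Fin n → Pt) (i : Fin n) : Prop :=
  0 < det2 (v i - v (i - 1)) (v (i + 1) - v i)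

/-- The vertex `v i` of a counterclockwise polygon is reflex
(interior angle greater than or equal to 180°). -/
def ReflexAt {n : ℕ} [NeZero n] (v : Fin n → Pt) (i : Fin n) : Prop :=
  det2 (v i - v (i - 1)) (v (i + 1) - v i) ≤ 0

/-- The wedge of vertex `v i`:  `L(v⁻, v) ∩ R(v⁺, v) ∩ interior P`. -/
def Wedge {n : ℕ} [NeZero n] (v : Fin n → Pt) (i : Fin n) : Set Pt :=
  Lhp (v (i - 1)) (v i) ∩ Rhp (v (i + 1)) (v i) ∩ polyInterior v

/-- `x` sees `y` inside the polygon `v`: the segment `xy` is contained in the region. -/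
def Sees {n : ℕ} [NeZero n] (v : Fin n → Pt) (x y : Pt) : Prop :=
  segment ℝ x y ⊆ polyRegion v

/-- The kernel of the polygon: the points of the region that see every point of it. -/
def polyKernel {n : ℕ} [NeZero n] (v : Fin n → Pt) : Set Pt :=
  {x ∈ polyRegion v | ∀ y ∈ polyRegion v, segment ℝ x y ⊆ polyRegion v}

/-- The open triangle on three points. -/
def openTriangle (a b c : Pt) : Set Pt := interior (convexHull ℝ {a, b, c})

/-- `a b c d` (in counterclockwise order) form a strictly convex quadrilateral. -/
def StrictConvexQuad (a b c d : Pt) : Prop :=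
  0 < det2 (b - a) (c - b) ∧ 0 < det2 (c - b) (d - c) ∧
    0 < det2 (d - c) (a - d) ∧ 0 < det2 (a - d) (b - a)

/-- The closed region of a quadrilateral cell. -/
noncomputable def quadSet (q : Pt × Pt × Pt × Pt) : Set Pt :=
  convexHull ℝ {q.1, q.2.1, q.2.2.1, q.2.2.2}

/-- The closed region of a triangular cell. -/
noncomputable def triSet (t : Pt × Pt × Pt) : Set Pt :=
  convexHull ℝ {t.1, t.2.1, t.2.2}

/-- The vertices of a quadrilateral cell. -/
noncomputable def quadVerts (q : Pt × Pt × Pt × Pt) : Finset Pt :=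
  {q.1, q.2.1, q.2.2.1, q.2.2.2}

/-- The vertices of a triangular cell. -/
noncomputable def triVerts (t : Pt × Pt × Pt) : Finset Pt :=
  {t.1, t.2.1, t.2.2}

/-- A strictly convex quadrangulation of a finite planar point set `S`:
a decomposition of `conv S` into strictly convex quadrilaterals and at most one
(nondegenerate) triangle, with pairwise disjoint interiors, whose vertex set contains
`S`, and such that no point of `S` is interior to a cell. -/
structure ConvexQuadrangulation (S : Finset Pt) where
  quads : Finset (Pt × Pt × Pt × Pt)
  tris : Finset (Pt × Pt × Pt)
  tris_card : tris.card ≤ 1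
  quads_convex : ∀ q ∈ quads, StrictConvexQuad q.1 q.2.1 q.2.2.1 q.2.2.2
  tris_nondeg : ∀ t ∈ tris, 0 < det2 (t.2.1 - t.1) (t.2.2 - t.2.1)
  covers : ((⋃ q ∈ quads, quadSet q) ∪ ⋃ t ∈ tris, triSet t) = convexHull ℝ (S : Set Pt)
  cells_disjoint : ((quadSet '' quads) ∪ (triSet '' tris)).Pairwise
    fun A B => interior A ∩ interior B = ∅
  verts_cover : (S : Set Pt) ⊆
    ((quads.biUnion quadVerts ∪ tris.biUnion triVerts : Finset Pt) : Set Pt)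
  no_pt_in_quad_interior : ∀ q ∈ quads, ∀ p ∈ S, p ∉ interior (quadSet q)
  no_pt_in_tri_interior : ∀ t ∈ tris, ∀ p ∈ S, p ∉ interior (triSet t)

/-- The Steiner points of a quadrangulation: vertices of the decomposition not in `S`. -/
noncomputable def steinerPoints (S : Finset Pt) (Q : ConvexQuadrangulation S) : Finset Pt :=
  (Q.quads.biUnion quadVerts ∪ Q.tris.biUnion triVerts) \ S


/-! ### Part 1: plane geometry -/

/-- Orientation determinant of three points. -/
noncomputable def det3 (a b c : Pt) : ℝ := det2 (b - a) (c - a)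

lemma det3_eq (a b c : Pt) :
    det3 a b c = (b.1 - a.1) * (c.2 - a.2) - (b.2 - a.2) * (c.1 - a.1) := by
  simp [det3, det2]

lemma det3_cyc (a b c : Pt) : det3 b c a = det3 a b c := by
  simp only [det3_eq]; ring

lemma det3_swap (a b c : Pt) : det3 b a c = - det3 a b c := by
  simp only [det3_eq]; ring

lemma det3_self_left (a b : Pt) : det3 a b a = 0 := by
  simp only [det3_eq]; ring

lemma det3_self_right (a b : Pt) : det3 a b b = 0 := by
  simp only [det3_eq]; ring

lemma det3_sum (a b c d : Pt) : det3 a b d + det3 b c d + det3 c a d = det3 a b c := by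
  simp only [det3_eq]; ring

lemma det3_comb (a b x y : Pt) (s t : ℝ) (h : s + t = 1) :
    det3 a b (s • x + t • y) = s * det3 a b x + t * det3 a b y := by
  obtain rfl : t = 1 - s := by linarith
  simp only [det3_eq, Prod.fst_add, Prod.snd_add, Prod.smul_fst, Prod.smul_snd, smul_eq_mul]
  ring

lemma convex_hp (a b : Pt) : Convex ℝ {z | 0 ≤ det3 a b z} := by
  intro x hx y hy s t hs ht hst
  simp only [Set.mem_setOf_eq] at *
  rw [det3_comb _ _ _ _ _ _ hst]
  positivity

lemma continuous_det3 (a b : Pt) : Continuous (fun z => det3 a b z) := by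
  simp only [det3_eq]; fun_prop

/-- a closed nondegenerate triangle is contained in any convex set containing its vertices -/
lemma tri_mem {K : Set Pt} (hK : Convex ℝ K) {a b c z : Pt} (ha : a ∈ K) (hb : b ∈ K)
    (hc : c ∈ K) (h0 : 0 < det3 a b c) (h1 : 0 ≤ det3 a b z) (h2 : 0 ≤ det3 b c z)
    (h3 : 0 ≤ det3 c a z) : z ∈ K := by
  have hs := det3_sum a b c z
  have key := hK.sum_mem (t := (Finset.univ : Finset (Fin 3)))
    (w := ![det3 b c z / det3 a b c, det3 c a z / det3 a b c, det3 a b z / det3 a b c])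
    (z := ![a, b, c])
    (by intro i _; fin_cases i <;> simp <;> positivity)
    (by simp [Fin.sum_univ_three]; field_simp; linarith)
    (by intro i _; fin_cases i <;> simp [ha, hb, hc])
  simp [Fin.sum_univ_three] at key
  convert key using 1
  have hne := h0.ne'
  ext
  · simp only [Prod.fst_add, Prod.smul_fst, smul_eq_mul]
    field_simp
    simp only [det3_eq]; ring
  · simp only [Prod.snd_add, Prod.smul_snd, smul_eq_mul]
    field_simp
    simp only [det3_eq]; ring

lemma tri_interior {K : Set Pt} (hK : Convex ℝ K) {a b c z : Pt} (ha : a ∈ K) (hb : b ∈ K)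
    (hc : c ∈ K) (h1 : 0 < det3 a b z) (h2 : 0 < det3 b c z)
    (h3 : 0 < det3 c a z) : z ∈ interior K := by
  have hs := det3_sum a b c z
  have hop : IsOpen {z | 0 < det3 a b z ∧ 0 < det3 b c z ∧ 0 < det3 c a z} := by
    refine (isOpen_lt continuous_const (continuous_det3 a b)).inter
      ((isOpen_lt continuous_const (continuous_det3 b c)).inter
        (isOpen_lt continuous_const (continuous_det3 c a)))
  refine interior_maximal ?_ hop ⟨h1, h2, h3⟩
  rintro w ⟨g1, g2, g3⟩
  exact tri_mem hK ha hb hc (by linarith) g1.le g2.le g3.le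

/-- Face lemma: a point of a polygon on a supporting line is spanned by the vertices on it. -/
lemma face_mem {W : Finset Pt} {a b m : Pt} (hW : ∀ w ∈ W, 0 ≤ det3 a b w)
    (hm : m ∈ convexHull ℝ (W : Set Pt)) (h0 : det3 a b m = 0) :
    m ∈ convexHull ℝ {w : Pt | w ∈ W ∧ det3 a b w = 0} := by
  classical
  rw [Finset.mem_convexHull'] at hm
  obtain ⟨l, l0, l1, lm⟩ := hm
  have e1 : ∑ w ∈ W, l w * det3 a b w = 0 := by
    rw [← h0, ← lm]
    simp only [det3_eq, Prod.fst_sum, Prod.snd_sum, Prod.smul_fst, Prod.smul_snd, smul_eq_mul]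
    have : ∀ w : Pt, l w * ((b.1 - a.1) * (w.2 - a.2) - (b.2 - a.2) * (w.1 - a.1)) =
      (b.1 - a.1) * (l w * w.2) - (b.2 - a.2) * (l w * w.1)
        - l w * ((b.1 - a.1) * a.2 - (b.2 - a.2) * a.1) := by intro w; ring
    simp only [this, Finset.sum_sub_distrib, ← Finset.mul_sum, ← Finset.sum_mul, l1]
    ring
  have e2 := (Finset.sum_eq_zero_iff_of_nonneg
    (fun w hw => mul_nonneg (l0 w hw) (hW w hw))).1 e1
  have hz : ∀ w ∈ W, w ∉ W.filter (fun w => det3 a b w = 0) → l w = 0 := by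
    intro w hw hn
    rcases mul_eq_zero.1 (e2 w hw) with h | h
    · exact h
    · exact absurd (Finset.mem_filter.2 ⟨hw, h⟩) hn
  have : m ∈ convexHull ℝ ((W.filter (fun w => det3 a b w = 0) : Finset Pt) : Set Pt) := by
    rw [Finset.mem_convexHull']
    refine ⟨l, fun y hy => l0 y (Finset.mem_filter.1 hy).1, ?_, ?_⟩
    · rw [← l1]
      exact Finset.sum_subset (Finset.filter_subset _ _) hz
    · rw [← lm]
      refine Finset.sum_subset (Finset.filter_subset _ _) (fun w hw hn => ?_)
      rw [hz w hw hn, zero_smul]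
  simpa using this

/-- Midpoint of two points. -/
noncomputable def mid (a b : Pt) : Pt := (1 / 2 : ℝ) • a + (1 / 2 : ℝ) • b

lemma det3_mid (a b x y : Pt) : det3 a b (mid x y) = (det3 a b x + det3 a b y) / 2 := by
  rw [mid, det3_comb _ _ _ _ _ _ (by norm_num)]; ring

lemma face_mid {W : Finset Pt} {a b : Pt} (hab : a ≠ b) (hW : ∀ w ∈ W, 0 ≤ det3 a b w)
    (hm : mid a b ∈ convexHull ℝ (W : Set Pt))
    (hl : ∀ w ∈ W, det3 a b w = 0 → w = a ∨ w = b) : a ∈ W ∧ b ∈ W := by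
  have h := face_mem hW hm (by rw [det3_mid, det3_self_left, det3_self_right]; norm_num)
  have hne1 : mid a b ≠ a := by
    intro h; apply hab
    have h1 := congrArg Prod.fst h
    have h2 := congrArg Prod.snd h
    simp [mid] at h1 h2
    ext <;> linarith
  have hne2 : mid a b ≠ b := by
    intro h; apply hab
    have h1 := congrArg Prod.fst h
    have h2 := congrArg Prod.snd h
    simp [mid] at h1 h2
    ext <;> linarith
  constructor
  · by_contra ha
    have : {w : Pt | w ∈ W ∧ det3 a b w = 0} ⊆ {b} := by
      rintro w ⟨h1, h2⟩
      rcases hl w h1 h2 with h | h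
      · exact absurd (h ▸ h1) ha
      · exact h
    have := convexHull_mono this h
    rw [convexHull_singleton] at this
    exact hne2 this
  · by_contra ha
    have : {w : Pt | w ∈ W ∧ det3 a b w = 0} ⊆ {a} := by
      rintro w ⟨h1, h2⟩
      rcases hl w h1 h2 with h | h
      · exact h
      · exact absurd (h ▸ h1) ha
    have := convexHull_mono this h
    rw [convexHull_singleton] at this
    exact hne1 this

/-! ### Part 2: abstract decompositions -/

/-- Strictly convex position of a four element vertex set. -/
def IsQuad (W : Finset Pt) : Prop :=
  W.card = 4 ∧ ∀ a ∈ W, ∀ b ∈ W, ∀ c ∈ W, ∀ d ∈ W, a ≠ b → a ≠ c → a ≠ d → b ≠ c → b ≠ d →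
    c ≠ d → 0 < det3 a b c → 0 ≤ det3 a b d → 0 ≤ det3 b c d → 0 ≤ det3 c a d → False

/-- The properties of a quadrangulation used in the proof. -/
structure Dec (P St : Finset Pt) (C : Set (Finset Pt)) : Prop where
  fin : C.Finite
  vert : ∀ W ∈ C, ∀ z ∈ W, z ∈ P ∨ z ∈ St
  sub : ∀ W ∈ C, convexHull ℝ (W : Set Pt) ⊆ convexHull ℝ (P : Set Pt)
  stv : ∀ z ∈ St, z ∈ convexHull ℝ (P : Set Pt)
  disj : ∀ z ∈ St, z ∉ P
  cov : ∀ z ∈ convexHull ℝ (P : Set Pt), ∃ W ∈ C, z ∈ convexHull ℝ (W : Set Pt)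
  intne : ∀ W ∈ C, (interior (convexHull ℝ (W : Set Pt))).Nonempty
  overlap : ∀ W ∈ C, ∀ W' ∈ C, ∀ z ∈ interior (convexHull ℝ (W : Set Pt)),
    z ∈ convexHull ℝ (W' : Set Pt) → convexHull ℝ (W : Set Pt) = convexHull ℝ (W' : Set Pt)
  noint : ∀ W ∈ C, ∀ p ∈ P, p ∉ interior (convexHull ℝ (W : Set Pt))
  noncol : ∀ W ∈ C, ∀ a ∈ W, ∀ b ∈ W, ∀ c ∈ W, a ≠ b → a ≠ c → b ≠ c → det3 a b c ≠ 0
  kind : ∀ W ∈ C, IsQuad W ∨ W.card = 3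
  tri_unique : ∀ W ∈ C, ∀ W' ∈ C, W.card = 3 → W'.card = 3 → W = W'

lemma ne_of_det3_pos {a b c : Pt} (h : 0 < det3 a b c) : a ≠ b ∧ a ≠ c ∧ b ≠ c := by
  refine ⟨?_, ?_, ?_⟩ <;> rintro rfl <;> simp only [det3_eq] at h <;> nlinarith

lemma strictQuad_det {a b c d : Pt} (h : StrictConvexQuad a b c d) :
    0 < det3 a b c ∧ 0 < det3 b c d ∧ 0 < det3 c d a ∧ 0 < det3 d a b := by
  obtain ⟨h1, h2, h3, h4⟩ := h
  simp only [det2, Prod.fst_sub, Prod.snd_sub] at h1 h2 h3 h4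
  simp only [det3_eq]
  refine ⟨?_, ?_, ?_, ?_⟩ <;> linarith

lemma strictQuad_noncol {a b c d : Pt} (h : StrictConvexQuad a b c d) :
    ∀ x ∈ quadVerts (a, b, c, d), ∀ y ∈ quadVerts (a, b, c, d), ∀ z ∈ quadVerts (a, b, c, d),
      x ≠ y → x ≠ z → y ≠ z → det3 x y z ≠ 0 := by
  obtain ⟨h1, h2, h3, h4⟩ := strictQuad_det h
  simp only [det3_eq] at *
  intro x hx y hy z hz
  simp only [quadVerts, Finset.mem_insert, Finset.mem_singleton] at hx hy hz
  rcases hx with rfl | rfl | rfl | rfl <;> rcases hy with rfl | rfl | rfl | rfl <;>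
    rcases hz with rfl | rfl | rfl | rfl <;> intro n1 n2 n3 h0 <;>
    first
    | exact absurd rfl n1
    | exact absurd rfl n2
    | exact absurd rfl n3
    | linarith

lemma strictQuad_isQuad {a b c d : Pt} (h : StrictConvexQuad a b c d) :
    IsQuad (quadVerts (a, b, c, d)) := by
  obtain ⟨h1, h2, h3, h4⟩ := strictQuad_det h
  obtain ⟨n1, n2, n3⟩ := ne_of_det3_pos h1
  obtain ⟨m1, m2, m3⟩ := ne_of_det3_pos h2
  obtain ⟨l1, l2, l3⟩ := ne_of_det3_pos h3
  refine ⟨?_, ?_⟩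
  · simp only [quadVerts]
    rw [Finset.card_insert_of_notMem, Finset.card_insert_of_notMem,
      Finset.card_insert_of_notMem, Finset.card_singleton]
    · simpa using m3
    · simp only [Finset.mem_insert, Finset.mem_singleton]; tauto
    · simp only [Finset.mem_insert, Finset.mem_singleton]
      have := l3.symm
      tauto
  · intro x hx y hy z hz w hw
    simp only [det3_eq] at *
    simp only [quadVerts, Finset.mem_insert, Finset.mem_singleton] at hx hy hz hw
    rcases hx with rfl | rfl | rfl | rfl <;> rcases hy with rfl | rfl | rfl | rfl <;>
      first
      | (intro e; exact absurd rfl e)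
      | skip
    all_goals
      rcases hz with rfl | rfl | rfl | rfl <;>
      first
      | (intro _ e; exact absurd rfl e)
      | (intro _ _ _ e; exact absurd rfl e)
      | skip
    all_goals
      rcases hw with rfl | rfl | rfl | rfl <;>
      first
      | (intro _ _ e; exact absurd rfl e)
      | (intro _ _ _ _ e; exact absurd rfl e)
      | (intro _ _ _ _ _ e; exact absurd rfl e)
      | (intro _ _ _ _ _ _ g1 g2 g3 g4; linarith)

lemma exists_dec (S : Finset Pt) (Q : ConvexQuadrangulation S) :
    ∃ C, Dec S (steinerPoints S Q) C := by
  classical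
  let C : Set (Finset Pt) := {W | (∃ q ∈ Q.quads, W = quadVerts q) ∨ ∃ t ∈ Q.tris, W = triVerts t}
  have hq : ∀ q : Pt × Pt × Pt × Pt, convexHull ℝ (quadVerts q : Set Pt) = quadSet q := by
    intro q; simp [quadVerts, quadSet]
  have ht : ∀ t : Pt × Pt × Pt, convexHull ℝ (triVerts t : Set Pt) = triSet t := by
    intro t; simp [triVerts, triSet]
  have htd : ∀ t ∈ Q.tris, 0 < det3 t.1 t.2.1 t.2.2 := by
    intro t htt
    have := Q.tris_nondeg t htt
    simp only [det2, Prod.fst_sub, Prod.snd_sub] at this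
    simp only [det3_eq]; linarith
  have hsub : ∀ W ∈ C, convexHull ℝ (W : Set Pt) ⊆ convexHull ℝ (S : Set Pt) := by
    rintro W (⟨q, hq', rfl⟩ | ⟨t, ht', rfl⟩)
    · rw [hq, ← Q.covers]
      intro z hz
      left
      simp only [Set.mem_iUnion]
      exact ⟨q, hq', hz⟩
    · rw [ht, ← Q.covers]
      intro z hz
      right
      simp only [Set.mem_iUnion]
      exact ⟨t, ht', hz⟩
  have hnonemp : ∀ W ∈ C, (interior (convexHull ℝ (W : Set Pt))).Nonempty := by
    have gen : ∀ (K : Set Pt) (a b c : Pt), Convex ℝ K → a ∈ K → b ∈ K → c ∈ K →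
        0 < det3 a b c → (interior K).Nonempty := by
      intro K a b c hK ha hb hc h
      refine ⟨(1 / 3 : ℝ) • a + (1 / 3 : ℝ) • b + (1 / 3 : ℝ) • c,
        tri_interior hK ha hb hc ?_ ?_ ?_⟩ <;>
      · simp only [det3_eq, Prod.fst_add, Prod.snd_add, Prod.smul_fst, Prod.smul_snd,
          smul_eq_mul] at *
        linarith
    rintro W (⟨q, hq', rfl⟩ | ⟨t, ht', rfl⟩)
    · refine gen _ q.1 q.2.1 q.2.2.1 (convex_convexHull _ _) ?_ ?_ ?_
        (strictQuad_det (Q.quads_convex q hq')).1 <;>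
      exact subset_convexHull _ _ (by simp [quadVerts])
    · refine gen _ t.1 t.2.1 t.2.2 (convex_convexHull _ _) ?_ ?_ ?_ (htd t ht') <;>
      exact subset_convexHull _ _ (by simp [triVerts])
  have himg : ∀ W ∈ C, convexHull ℝ (W : Set Pt) ∈ (quadSet '' Q.quads) ∪ (triSet '' Q.tris) := by
    rintro W (⟨q, hq', rfl⟩ | ⟨t, ht', rfl⟩)
    · rw [hq]; left; exact ⟨q, hq', rfl⟩
    · rw [ht]; right; exact ⟨t, ht', rfl⟩
  have hall : ∀ W ∈ C, ∀ z ∈ W, z ∈ Q.quads.biUnion quadVerts ∪ Q.tris.biUnion triVerts := by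
    rintro W (⟨q, hq', rfl⟩ | ⟨t, ht', rfl⟩) z hz
    · exact Finset.mem_union_left _ (Finset.mem_biUnion.2 ⟨q, hq', hz⟩)
    · exact Finset.mem_union_right _ (Finset.mem_biUnion.2 ⟨t, ht', hz⟩)
  refine ⟨C, ?_, ?_, hsub, ?_, ?_, ?_, hnonemp, ?_, ?_, ?_, ?_, ?_⟩
  · have : C ⊆ ((Q.quads.image quadVerts ∪ Q.tris.image triVerts : Finset (Finset Pt)) :
        Set (Finset Pt)) := by
      rintro W (⟨q, hq', rfl⟩ | ⟨t, ht', rfl⟩)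
      · exact Finset.mem_union_left _ (Finset.mem_image_of_mem _ hq')
      · exact Finset.mem_union_right _ (Finset.mem_image_of_mem _ ht')
    exact (Finset.finite_toSet _).subset this
  · intro W hW z hz
    by_cases h : z ∈ S
    · exact Or.inl h
    · exact Or.inr (Finset.mem_sdiff.2 ⟨hall W hW z hz, h⟩)
  · intro z hz
    have hz' := (Finset.mem_sdiff.1 hz).1
    rcases Finset.mem_union.1 hz' with h | h
    · obtain ⟨q, h1, h2⟩ := Finset.mem_biUnion.1 h
      exact hsub (quadVerts q) (Or.inl ⟨q, h1, rfl⟩) (subset_convexHull _ _ h2)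
    · obtain ⟨q, h1, h2⟩ := Finset.mem_biUnion.1 h
      exact hsub (triVerts q) (Or.inr ⟨q, h1, rfl⟩) (subset_convexHull _ _ h2)
  · intro z hz
    exact (Finset.mem_sdiff.1 hz).2
  · intro z hz
    rw [← Q.covers] at hz
    rcases hz with hz | hz
    · simp only [Set.mem_iUnion] at hz
      obtain ⟨q, h1, h2⟩ := hz
      exact ⟨quadVerts q, Or.inl ⟨q, h1, rfl⟩, by rw [hq]; exact h2⟩
    · simp only [Set.mem_iUnion] at hz
      obtain ⟨q, h1, h2⟩ := hz
      exact ⟨triVerts q, Or.inr ⟨q, h1, rfl⟩, by rw [ht]; exact h2⟩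
  · intro W hW W' hW' z hz hz'
    by_contra hne
    have h := Q.cells_disjoint (himg W hW) (himg W' hW') hne
    have hcl : z ∈ closure (interior (convexHull ℝ (W' : Set Pt))) := by
      rw [(convex_convexHull ℝ _).closure_interior_eq_closure_of_nonempty_interior (hnonemp W' hW')]
      exact subset_closure hz'
    obtain ⟨y, hy⟩ := mem_closure_iff.1 hcl _ isOpen_interior hz
    have : y ∈ (∅ : Set Pt) := h ▸ hy
    exact this
  · rintro W (⟨q, hq', rfl⟩ | ⟨t, ht', rfl⟩) p hp
    · rw [hq]; exact Q.no_pt_in_quad_interior q hq' p hp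
    · rw [ht]; exact Q.no_pt_in_tri_interior t ht' p hp
  · rintro W (⟨q, hq', rfl⟩ | ⟨t, ht', rfl⟩)
    · exact strictQuad_noncol (Q.quads_convex q hq')
    · have h := htd t ht'
      intro x hx y hy z hz
      simp only [det3_eq] at *
      simp only [triVerts, Finset.mem_insert, Finset.mem_singleton] at hx hy hz
      rcases hx with rfl | rfl | rfl <;> rcases hy with rfl | rfl | rfl <;>
        rcases hz with rfl | rfl | rfl <;> intro n1 n2 n3 h0 <;>
        first
        | exact absurd rfl n1
        | exact absurd rfl n2
        | exact absurd rfl n3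
        | linarith
  · rintro W (⟨q, hq', rfl⟩ | ⟨t, ht', rfl⟩)
    · exact Or.inl (strictQuad_isQuad (Q.quads_convex q hq'))
    · right
      obtain ⟨n1, n2, n3⟩ := ne_of_det3_pos (htd t ht')
      simp [triVerts, n1, n2, n3]
  · rintro W (⟨q, hq', rfl⟩ | ⟨t, ht', rfl⟩) W' (⟨q2, hq2, rfl⟩ | ⟨t2, ht2, rfl⟩) c1 c2
    · rw [(strictQuad_isQuad (Q.quads_convex q hq')).1] at c1; omega
    · rw [(strictQuad_isQuad (Q.quads_convex q hq')).1] at c1; omega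
    · rw [(strictQuad_isQuad (Q.quads_convex q2 hq2)).1] at c2; omega
    · rw [Finset.card_le_one.1 Q.tris_card t ht' t2 ht2]

/-! ### Part 3: crossing an edge, and the ear argument -/

lemma det3_rot (a b c : Pt) : det3 c a b = det3 a b c := by
  simp only [det3_eq]; ring

lemma det3_rev (a b c : Pt) : det3 c b a = - det3 a b c := by
  simp only [det3_eq]; ring

lemma det3_flip (a b c : Pt) : det3 a c b = - det3 a b c := by
  simp only [det3_eq]; ring

lemma ne_of_sorted {N : ℕ} {x : ℕ → Pt}
    (ne0 : ∀ a b c, a < b → b < c → c < N → det3 (x a) (x b) (x c) ≠ 0) :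
    ∀ a b c, a < N → b < N → c < N → a ≠ b → a ≠ c → b ≠ c →
      det3 (x a) (x b) (x c) ≠ 0 := by
  intro a b c ha hb hc h1 h2 h3
  rcases lt_or_gt_of_ne h1 with h1 | h1 <;> rcases lt_or_gt_of_ne h2 with h2 | h2 <;>
    rcases lt_or_gt_of_ne h3 with h3 | h3
  · exact ne0 a b c h1 h3 hc
  · have := ne0 a c b h2 h3 hb
    rw [det3_flip]; simpa using this
  · omega
  · have := ne0 c a b h2 h1 hb
    rw [det3_rot] at this; exact this
  · have := ne0 b a c h1 h2 hc
    rw [det3_swap]; simpa using this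
  · omega
  · have := ne0 b c a h3 h2 ha
    rw [← det3_cyc]; exact this
  · have := ne0 c b a h3 h1 ha
    rw [det3_rev]; simpa using this

lemma inj_of_ne {N : ℕ} {x : ℕ → Pt} (hN : 3 ≤ N)
    (ne1 : ∀ a b c, a < N → b < N → c < N → a ≠ b → a ≠ c → b ≠ c → det3 (x a) (x b) (x c) ≠ 0) :
    ∀ a b, a < N → b < N → a ≠ b → x a ≠ x b := by
  intro a b ha hb hab he
  obtain ⟨c, hc, h1, h2⟩ : ∃ c, c < N ∧ c ≠ a ∧ c ≠ b := by
    by_cases h0 : 0 ≠ a ∧ 0 ≠ b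
    · exact ⟨0, by omega, h0.1, h0.2⟩
    by_cases h0 : 1 ≠ a ∧ 1 ≠ b
    · exact ⟨1, by omega, h0.1, h0.2⟩
    exact ⟨2, by omega, by omega, by omega⟩
  apply ne1 a b c ha hb hc hab h1.symm h2.symm
  rw [he]; simp only [det3_eq]; ring

lemma conv_hp {W : Finset Pt} {a b : Pt} (h : ∀ u ∈ W, 0 ≤ det3 a b u) :
    ∀ z ∈ convexHull ℝ (W : Set Pt), 0 ≤ det3 a b z :=
  fun _ hz => convexHull_min (s := (W : Set Pt)) (t := {z | 0 ≤ det3 a b z})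
    (fun u hu => h u hu) (convex_hp a b) hz

lemma tendsto_det3_comb (a b m z : Pt) :
    Filter.Tendsto (fun t : ℝ => det3 a b ((1 - t) • m + t • z)) (nhdsWithin 0 (Set.Ioi 0))
      (nhds (det3 a b m)) := by
  have h : Continuous (fun t : ℝ => det3 a b ((1 - t) • m + t • z)) :=
    (continuous_det3 a b).comp (by fun_prop)
  have := (h.tendsto 0).mono_left (nhdsWithin_le_nhds (s := Set.Ioi 0))
  simpa using this

lemma across {P St : Finset Pt} {C : Set (Finset Pt)} (hD : Dec P St C) {W : Finset Pt}
    (hW : W ∈ C) {x y w w' : Pt} (hx : x ∈ W) (hy : y ∈ W) (hw : w ∈ W) (hpos : 0 < det3 x y w)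
    (hleft : ∀ u ∈ W, 0 ≤ det3 x y u) (hw' : w' ∈ convexHull ℝ (P : Set Pt))
    (hneg : 0 < det3 y x w') :
    ∃ W' ∈ C, mid x y ∈ convexHull ℝ (W' : Set Pt) ∧ ∀ u ∈ W', 0 ≤ det3 y x u := by
  have hxP := hD.sub W hW (subset_convexHull ℝ _ hx)
  have hyP := hD.sub W hW (subset_convexHull ℝ _ hy)
  have hcP : Convex ℝ (convexHull ℝ (P : Set Pt)) := convex_convexHull _ _
  have hmP : mid x y ∈ convexHull ℝ (P : Set Pt) :=
    hcP hxP hyP (by norm_num) (by norm_num) (by norm_num)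
  let F : ℝ → Pt := fun t => (1 - t) • mid x y + t • w'
  have h01 : ∀ᶠ t : ℝ in nhdsWithin 0 (Set.Ioi 0), 0 < t ∧ t < 1 := by
    filter_upwards [Ioo_mem_nhdsGT (show (0 : ℝ) < 1 by norm_num)] with t ht using ht
  have hex : ∃ W' ∈ C, ∃ᶠ t : ℝ in nhdsWithin 0 (Set.Ioi 0),
      F t ∈ convexHull ℝ (W' : Set Pt) := by
    by_contra hcon
    push Not at hcon
    have h2 : ∀ᶠ t : ℝ in nhdsWithin 0 (Set.Ioi 0), ∀ W' ∈ C,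
        F t ∉ convexHull ℝ (W' : Set Pt) := by
      rw [Filter.eventually_all_finite hD.fin]
      intro W' hW'
      exact hcon W' hW'
    obtain ⟨t, ht1, ht2⟩ := (h01.and h2).exists
    obtain ⟨W', h3, h4⟩ := hD.cov (F t) (hcP hmP hw' (by linarith [ht1.2]) ht1.1.le (by ring))
    exact ht2 W' h3 h4
  obtain ⟨W', hW', hfr⟩ := hex
  have hclosed : IsClosed (convexHull ℝ (W' : Set Pt)) :=
    (Set.Finite.isCompact_convexHull ℝ (W'.finite_toSet)).isClosed
  have hFt : Filter.Tendsto F (nhdsWithin 0 (Set.Ioi 0)) (nhds (mid x y)) := by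
    have h : Continuous F := by fun_prop
    have := (h.tendsto 0).mono_left (nhdsWithin_le_nhds (s := Set.Ioi 0))
    simpa [F] using this
  have hm : mid x y ∈ convexHull ℝ (W' : Set Pt) := hclosed.mem_of_frequently_of_tendsto hfr hFt
  refine ⟨W', hW', hm, ?_⟩
  obtain ⟨t, ht, ht1⟩ := (hfr.and_eventually h01).exists
  have hmid0 : det3 y x (mid x y) = 0 := by
    rw [det3_mid, det3_self_left, det3_self_right]; norm_num
  have hFneg : det3 x y (F t) < 0 := by
    have : 0 < det3 y x (F t) := by
      rw [det3_comb _ _ _ _ _ _ (by ring), hmid0]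
      have := mul_pos ht1.1 hneg
      linarith
    rw [det3_swap] at this; linarith
  intro u hu
  by_contra hlt
  rw [det3_swap] at hlt
  have hupos : 0 < det3 x y u := by linarith
  -- points near the midpoint towards `u` are interior to `W`
  have hcm : Convex ℝ (convexHull ℝ (W : Set Pt)) := convex_convexHull _ _
  have e1 : 0 < det3 y w (mid x y) := by
    rw [det3_mid, det3_self_left, det3_cyc]; linarith
  have e2 : 0 < det3 w x (mid x y) := by
    rw [det3_mid, det3_self_right, ← det3_cyc]; linarith
  have ev1 := (tendsto_det3_comb y w (mid x y) u).eventually (lt_mem_nhds e1)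
  have ev2 := (tendsto_det3_comb w x (mid x y) u).eventually (lt_mem_nhds e2)
  obtain ⟨r, ⟨hr1, hr2⟩, hr0, hr3⟩ := ((ev1.and ev2).and h01).exists
  have hmem : (1 - r) • mid x y + r • u ∈ interior (convexHull ℝ (W : Set Pt)) := by
    refine tri_interior hcm (subset_convexHull ℝ _ hx) (subset_convexHull ℝ _ hy)
      (subset_convexHull ℝ _ hw) ?_ hr1 hr2
    rw [det3_comb _ _ _ _ _ _ (by ring), det3_mid, det3_self_left, det3_self_right]
    have := mul_pos hr0 hupos
    linarith
  have hmem' : (1 - r) • mid x y + r • u ∈ convexHull ℝ (W' : Set Pt) :=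
    (convex_convexHull ℝ _) hm (subset_convexHull ℝ _ hu) (by linarith) hr0.le (by ring)
  have heq := hD.overlap W hW W' hW' _ hmem hmem'
  have := conv_hp hleft (F t) (heq ▸ ht)
  linarith

lemma hidden_cell {P St : Finset Pt} {C : Set (Finset Pt)} (hD : Dec P St C)
    {D C1 C2 : Finset Pt} (hDC : D ∈ C) (hC1 : C1 ∈ C) (hC2 : C2 ∈ C) {a h b s : Pt}
    (hh : h ∈ D) (a1 : a ∈ C1) (h1 : h ∈ C1) (s1 : s ∈ C1) (h2 : h ∈ C2) (b2 : b ∈ C2)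
    (s2 : s ∈ C2) (p1 : 0 < det3 a h s) (p2 : 0 < det3 h b s)
    (q1 : ∀ u ∈ D, 0 ≤ det3 a h u) (q2 : ∀ u ∈ D, 0 ≤ det3 h b u) :
    convexHull ℝ (D : Set Pt) = convexHull ℝ (C1 : Set Pt) ∨
      convexHull ℝ (D : Set Pt) = convexHull ℝ (C2 : Set Pt) := by
  obtain ⟨y, hy⟩ := hD.intne D hDC
  have hyD := interior_subset hy
  have h01 : ∀ᶠ t : ℝ in nhdsWithin 0 (Set.Ioi 0), 0 < t ∧ t < 1 := by
    filter_upwards [Ioo_mem_nhdsGT (show (0 : ℝ) < 1 by norm_num)] with t ht using ht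
  have hin : ∀ t : ℝ, 0 < t → t < 1 → (1 - t) • h + t • y ∈ interior (convexHull ℝ (D : Set Pt)) := by
    intro t t0 t1
    exact (convex_convexHull ℝ _).combo_self_interior_mem_interior
      (subset_convexHull ℝ _ hh) hy (by linarith) t0 (by ring)
  have y1 := conv_hp q1 y hyD
  have y2 := conv_hp q2 y hyD
  rcases le_total 0 (det3 h s y) with hs | hs
  · left
    have e1 : 0 < det3 s a h := by rw [det3_rot]; exact p1
    obtain ⟨t, ht, t0, t1⟩ :=
      (((tendsto_det3_comb s a h y).eventually (lt_mem_nhds e1)).and h01).exists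
    refine hD.overlap D hDC C1 hC1 _ (hin t t0 t1) ?_
    refine tri_mem (convex_convexHull ℝ _) (subset_convexHull ℝ _ a1) (subset_convexHull ℝ _ h1)
      (subset_convexHull ℝ _ s1) p1 ?_ ?_ ht.le
    · rw [det3_comb _ _ _ _ _ _ (by ring), det3_self_right]
      have := mul_nonneg t0.le y1
      linarith
    · rw [det3_comb _ _ _ _ _ _ (by ring), det3_self_left]
      have := mul_nonneg t0.le hs
      linarith
  · right
    have e1 : 0 < det3 b s h := by rw [det3_cyc]; exact p2
    obtain ⟨t, ht, t0, t1⟩ :=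
      (((tendsto_det3_comb b s h y).eventually (lt_mem_nhds e1)).and h01).exists
    refine hD.overlap D hDC C2 hC2 _ (hin t t0 t1) ?_
    refine tri_mem (convex_convexHull ℝ _) (subset_convexHull ℝ _ h2) (subset_convexHull ℝ _ b2)
      (subset_convexHull ℝ _ s2) p2 ?_ ht.le ?_
    · rw [det3_comb _ _ _ _ _ _ (by ring), det3_self_left]
      have := mul_nonneg t0.le y2
      linarith
    · rw [det3_comb _ _ _ _ _ _ (by ring), det3_self_right, det3_swap]
      have := mul_nonneg t0.le (neg_nonneg.2 hs)
      linarith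

/-- The exceptional (reflex) triples. -/
def Exc (N a b c : ℕ) : Prop := (a % 2 = 1 ∧ b = a + 1 ∧ c = a + 2) ∨ (a = 0 ∧ b = 1 ∧ c + 1 = N)

/-- The ear argument. -/
lemma ear {P St : Finset Pt} {C : Set (Finset Pt)} (hD : Dec P St C) {N : ℕ} (hN : 8 ≤ N)
    (hN2 : N % 2 = 0)
    (x : ℕ → Pt) (E : ℕ → Finset Pt) (T : Finset Pt)
    (ori : ∀ a b c, a < b → b < c → c < N → ¬ Exc N a b c → 0 < det3 (x a) (x b) (x c))
    (rev : ∀ a b c, a < b → b < c → c < N → Exc N a b c → det3 (x a) (x b) (x c) < 0)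
    (hullx : ∀ t < N, x t ∈ convexHull ℝ (P : Set Pt))
    (hE : ∀ a, a % 2 = 1 → a + 2 < N → E a ∈ C ∧ x a ∈ E a ∧ x (a + 1) ∈ E a ∧
      x (a + 2) ∈ E a ∧ (∃ h ∈ convexHull ℝ (P : Set Pt), 0 < det3 (x (a + 2)) (x a) h) ∧
      (∀ u ∈ E a, 0 ≤ det3 (x (a + 1)) (x a) u) ∧ (∀ u ∈ E a, 0 ≤ det3 (x (a + 2)) (x (a + 1)) u))
    (hT : T ∈ C) (hT3 : T.card = 3) (hT0 : x 0 ∈ T) (hT1 : x 1 ∈ T) (hT2 : x (N - 1) ∈ T)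
    (verts : ∀ W ∈ C, ∀ z ∈ W, (∃ t < N, z = x t) ∨
      ∃ a, a % 2 = 1 ∧ a + 2 < N ∧ convexHull ℝ (W : Set Pt) = convexHull ℝ (E a : Set Pt)) :
    False := by
  classical
  -- orientation helpers
  have ne0 : ∀ a b c, a < b → b < c → c < N → det3 (x a) (x b) (x c) ≠ 0 := by
    intro a b c h1 h2 h3
    by_cases h : Exc N a b c
    · exact (rev a b c h1 h2 h3 h).ne
    · exact (ori a b c h1 h2 h3 h).ne'
  have ne1 := ne_of_sorted ne0
  have xne := inj_of_ne (by omega) ne1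
  -- the side of a chord
  have side : ∀ i j m, i + 2 ≤ j → j < N → m < N → ¬ (i = 1 ∧ j + 1 = N) →
      0 ≤ det3 (x j) (x i) (x m) → i ≤ m ∧ m ≤ j := by
    intro i j m hij hj hm hex hdet
    constructor
    · by_contra hlt
      have h1 := ori m i j (by omega) (by omega) hj (by unfold Exc; omega)
      rw [det3_rev] at hdet
      linarith
    · by_contra hlt
      have h1 := ori i j m (by omega) (by omega) hm (by unfold Exc; omega)
      rw [det3_swap] at hdet
      linarith
  -- main crossing step
  have cross : ∀ i j, i + 2 ≤ j → j < N → ¬ (i = 1 ∧ j + 1 = N) → ∀ D ∈ C, x i ∈ D → x j ∈ D →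
      ∀ w ∈ D, 0 < det3 (x i) (x j) w → (∀ u ∈ D, 0 ≤ det3 (x i) (x j) u) →
      ∃ D' ∈ C, ∃ m l, i < m ∧ m < l ∧ l < j ∧ x i ∈ D' ∧ x j ∈ D' ∧ x m ∈ D' ∧ x l ∈ D' ∧
        IsQuad D' ∧ (∀ u ∈ D', u = x i ∨ u = x m ∨ u = x l ∨ u = x j) ∧
        0 < det3 (x j) (x i) (x m) ∧ 0 < det3 (x j) (x i) (x l) := by
    intro i j hij hj hex D hDC hi hjD w hw hwpos hleft
    have hw' : ∃ w' ∈ convexHull ℝ (P : Set Pt), 0 < det3 (x j) (x i) w' := by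
      by_cases h : i % 2 = 1 ∧ j = i + 2
      · obtain ⟨h1, rfl⟩ := h
        exact (hE i h1 hj).2.2.2.2.1
      · by_cases h' : i = 0 ∧ j + 1 = N
        · refine ⟨x 2, hullx 2 (by omega), ?_⟩
          rw [det3_rot]
          exact ori i 2 j (by omega) (by omega) hj (by unfold Exc; omega)
        · refine ⟨x (i + 1), hullx _ (by omega), ?_⟩
          rw [det3_rot]
          exact ori i (i + 1) j (by omega) (by omega) hj (by unfold Exc; omega)
    obtain ⟨w', hw'P, hw'pos⟩ := hw'
    obtain ⟨D', hD'C, hmid, hright⟩ := across hD hDC hi hjD hw hwpos hleft hw'P hw'pos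
    have hconv := conv_hp hright
    -- not one of the boundary cells
    have notE : ∀ a, a % 2 = 1 → a + 2 < N →
        convexHull ℝ (D' : Set Pt) ≠ convexHull ℝ (E a : Set Pt) := by
      intro a ha haN heq
      obtain ⟨-, e1, e2, e3, -, e5, e6⟩ := hE a ha haN
      rw [heq] at hconv hmid
      have s1 := side i j a hij hj (by omega) hex (hconv _ (subset_convexHull ℝ _ e1))
      have s3 := side i j (a + 2) hij hj (by omega) hex (hconv _ (subset_convexHull ℝ _ e3))
      have m1 := conv_hp e5 _ hmid
      have m2 := conv_hp e6 _ hmid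
      rw [det3_mid] at m1 m2
      by_cases c1 : j = a + 2
      · by_cases c2 : i = a
        · subst c2; subst c1
          have h1 := rev i (i + 1) (i + 2) (by omega) (by omega) hj (Or.inl ⟨ha, rfl, rfl⟩)
          have h2 := hconv _ (subset_convexHull ℝ _ e2)
          rw [det3_rot] at h2
          linarith
        · have h1 := ori i (a + 1) (a + 2) (by omega) (by omega) (by omega) (by unfold Exc; omega)
          have h2 : det3 (x (a + 2)) (x (a + 1)) (x i) = - det3 (x i) (x (a + 1)) (x (a + 2)) := by
            simp only [det3_eq]; ring
          rw [c1, det3_self_left] at m2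
          linarith
      · have h1 := ori a (a + 1) j (by omega) (by omega) hj (by unfold Exc; omega)
        have h2 : det3 (x (a + 1)) (x a) (x j) = - det3 (x a) (x (a + 1)) (x j) := by
          simp only [det3_eq]; ring
        have h3 : det3 (x (a + 1)) (x a) (x i) ≤ 0 := by
          by_cases c2 : i = a
          · rw [c2, det3_self_right]
          · have h4 := ori i a (a + 1) (by omega) (by omega) (by omega) (by unfold Exc; omega)
            have h5 : det3 (x (a + 1)) (x a) (x i) = - det3 (x i) (x a) (x (a + 1)) := by
              simp only [det3_eq]; ring
            linarith
        linarith
    have hxs : ∀ z ∈ D', ∃ t < N, z = x t := by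
      intro z hz
      rcases verts D' hD'C z hz with h | ⟨a, h1, h2, h3⟩
      · exact h
      · exact absurd h3 (notE a h1 h2)
    -- not the triangle
    have notT : D'.card ≠ 3 := by
      intro h3
      obtain rfl := hD.tri_unique D' hD'C T hT h3 hT3
      have s1 := side i j 0 hij hj (by omega) hex (hright _ hT0)
      have s2 := side i j (N - 1) hij hj (by omega) hex (hright _ hT2)
      have hi0 : i = 0 := by omega
      have hj0 : j = N - 1 := by omega
      have h1 := rev 0 1 (N - 1) (by omega) (by omega) (by omega) (Or.inr ⟨rfl, rfl, by omega⟩)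
      have h2 := hright _ hT1
      rw [hi0, hj0] at h2
      have h5 : det3 (x (N - 1)) (x 0) (x 1) = det3 (x 0) (x 1) (x (N - 1)) := by
        simp only [det3_eq]; ring
      linarith
    have hquad : IsQuad D' := (hD.kind D' hD'C).resolve_right notT
    have hmid' : mid (x j) (x i) ∈ convexHull ℝ (D' : Set Pt) := by
      have : mid (x j) (x i) = mid (x i) (x j) := by simp only [mid]; rw [add_comm]
      rw [this]; exact hmid
    obtain ⟨hjD', hiD'⟩ := face_mid (xne j i hj (by omega) (by omega)) hright hmid' (by
      intro z hz hz0
      obtain ⟨t, ht, rfl⟩ := hxs z hz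
      by_contra hne
      push Not at hne
      have n1 : t ≠ j := fun h => hne.1 (by rw [h])
      have n2 : t ≠ i := fun h => hne.2 (by rw [h])
      exact ne1 j i t hj (by omega) ht (by omega) n1.symm n2.symm hz0)
    -- the remaining two vertices
    have hcard : ((D'.erase (x i)).erase (x j)).card = 2 := by
      rw [Finset.card_erase_of_mem, Finset.card_erase_of_mem hiD', hquad.1]
      exact Finset.mem_erase.2 ⟨xne j i hj (by omega) (by omega), hjD'⟩
    obtain ⟨y, z, hyz, hyzeq⟩ := Finset.card_eq_two.1 hcard
    have hy : y ∈ (D'.erase (x i)).erase (x j) := by rw [hyzeq]; simp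
    have hz : z ∈ (D'.erase (x i)).erase (x j) := by rw [hyzeq]; simp
    simp only [Finset.mem_erase] at hy hz
    obtain ⟨m, hm, rfl⟩ := hxs y hy.2.2
    obtain ⟨l, hl, rfl⟩ := hxs z hz.2.2
    have hmi : m ≠ i := fun h => hy.2.1 (by rw [h])
    have hmj : m ≠ j := fun h => hy.1 (by rw [h])
    have hli : l ≠ i := fun h => hz.2.1 (by rw [h])
    have hlj : l ≠ j := fun h => hz.1 (by rw [h])
    have hml : m ≠ l := fun h => hyz (by rw [h])
    have sm := side i j m hij hj hm hex (hright _ hy.2.2)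
    have sl := side i j l hij hj hl hex (hright _ hz.2.2)
    have pm : 0 < det3 (x j) (x i) (x m) :=
      lt_of_le_of_ne (hright _ hy.2.2) (ne1 j i m hj (by omega) hm (by omega) hmj.symm hmi.symm).symm
    have pl : 0 < det3 (x j) (x i) (x l) :=
      lt_of_le_of_ne (hright _ hz.2.2) (ne1 j i l hj (by omega) hl (by omega) hlj.symm hli.symm).symm
    have hall : ∀ u ∈ D', u = x i ∨ u = x m ∨ u = x l ∨ u = x j := by
      intro u hu
      by_cases h1 : u = x i
      · exact Or.inl h1
      by_cases h2 : u = x j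
      · exact Or.inr (Or.inr (Or.inr h2))
      have : u ∈ (D'.erase (x i)).erase (x j) := by simp [h1, h2, hu]
      rw [hyzeq] at this
      simp at this
      tauto
    rcases lt_or_gt_of_ne hml with h | h
    · exact ⟨D', hD'C, m, l, by omega, h, by omega, hiD', hjD', hy.2.2, hz.2.2, hquad, hall, pm, pl⟩
    · refine ⟨D', hD'C, l, m, by omega, h, by omega, hiD', hjD', hz.2.2, hy.2.2, hquad, ?_, pl, pm⟩
      intro u hu
      have := hall u hu
      tauto
  -- descent
  have descent : ∀ n i j, j - i ≤ n → i + 2 ≤ j → j < N → ¬ (i = 1 ∧ j + 1 = N) → ∀ D ∈ C,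
      x i ∈ D → x j ∈ D → ∀ w ∈ D, 0 < det3 (x i) (x j) w →
      (∀ u ∈ D, 0 ≤ det3 (x i) (x j) u) → False := by
    intro n
    induction n with
    | zero => intro i j h1 h2; omega
    | succ n ih =>
      intro i j hn hij hj hex D hDC hi hjD w hw hwpos hleft
      obtain ⟨D', hD'C, m, l, him, hml, hlj, hiD', hjD', hmD', hlD', hquad, hall, pm, pl⟩ :=
        cross i j hij hj hex D hDC hi hjD w hw hwpos hleft
      have nij := xne i j (by omega) hj (by omega)
      have nim := xne i m (by omega) (by omega) (by omega)
      have nil' := xne i l (by omega) (by omega) (by omega)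
      have nml := xne m l (by omega) (by omega) (by omega)
      have nmj := xne m j (by omega) (by omega) (by omega)
      have nlj := xne l j (by omega) (by omega) (by omega)
      have cyc1 : det3 (x j) (x i) (x m) = det3 (x i) (x m) (x j) := by
        simp only [det3_eq]; ring
      have cyc2 : det3 (x j) (x i) (x l) = det3 (x i) (x l) (x j) := by
        simp only [det3_eq]; ring
      -- no reflex corners
      have iml : 0 < det3 (x i) (x m) (x l) := by
        by_contra hneg
        have hexc : Exc N i m l := by
          by_contra h; exact hneg (ori i m l him hml (by omega) h)
        have h1 := rev i m l him hml (by omega) hexc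
        refine hquad.2 (x i) hiD' (x l) hlD' (x j) hjD' (x m) hmD' nil' nij nim nlj nml.symm
          nmj.symm ?_ ?_ ?_ pm.le
        · rw [← cyc2]; exact pl
        · have : det3 (x i) (x l) (x m) = - det3 (x i) (x m) (x l) := by
            simp only [det3_eq]; ring
          linarith
        · have h2 := ori m l j hml hlj hj (by unfold Exc at *; omega)
          rw [det3_cyc]; exact h2.le
      have mlj : 0 < det3 (x m) (x l) (x j) := by
        by_contra hneg
        have hexc : Exc N m l j := by
          by_contra h; exact hneg (ori m l j hml hlj (by omega) h)
        have h1 := rev m l j hml hlj (by omega) hexc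
        refine hquad.2 (x i) hiD' (x m) hmD' (x j) hjD' (x l) hlD' nim nij nil' nmj nml
          nlj.symm ?_ iml.le ?_ pl.le
        · rw [← cyc1]; exact pm
        · have : det3 (x m) (x j) (x l) = - det3 (x m) (x l) (x j) := by
            simp only [det3_eq]; ring
          linarith
      rw [cyc1] at pm
      rw [cyc2] at pl
      by_cases g1 : i + 2 ≤ m
      · refine ih i m (by omega) g1 (by omega) (by omega) D' hD'C hiD' hmD' (x l) hlD' iml ?_
        intro u hu
        rcases hall u hu with rfl | rfl | rfl | rfl
        · rw [det3_self_left]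
        · rw [det3_self_right]
        · exact iml.le
        · exact pm.le
      by_cases g2 : m + 2 ≤ l
      · refine ih m l (by omega) g2 (by omega) (by omega) D' hD'C hmD' hlD' (x j) hjD' mlj ?_
        intro u hu
        rcases hall u hu with rfl | rfl | rfl | rfl
        · rw [det3_cyc]; exact iml.le
        · rw [det3_self_left]
        · rw [det3_self_right]
        · exact mlj.le
      by_cases g3 : l + 2 ≤ j
      · have e1 : 0 < det3 (x l) (x j) (x m) := by rw [det3_cyc]; exact mlj
        refine ih l j (by omega) g3 (by omega) (by omega) D' hD'C hlD' hjD' (x m) hmD' e1 ?_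
        intro u hu
        rcases hall u hu with rfl | rfl | rfl | rfl
        · rw [det3_cyc]; exact pl.le
        · exact e1.le
        · rw [det3_self_left]
        · rw [det3_self_right]
      -- four consecutive vertices
      have hm' : m = i + 1 := by omega
      have hl' : l = i + 2 := by omega
      have hj' : j = i + 3 := by omega
      by_cases hodd : i % 2 = 1
      · have := rev i m l him hml (by omega) (Or.inl ⟨hodd, hm', hl'⟩)
        linarith
      · have := rev m l j hml hlj hj (Or.inl ⟨by omega, by omega, by omega⟩)
        linarith
  -- start with the triangle
  have h1 := rev 0 1 (N - 1) (by omega) (by omega) (by omega) (Or.inr ⟨rfl, rfl, by omega⟩)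
  have h2 : det3 (x 0) (x (N - 1)) (x 1) = - det3 (x 0) (x 1) (x (N - 1)) := by
    simp only [det3_eq]; ring
  refine descent N 0 (N - 1) (by omega) (by omega) (by omega) (by omega) T hT hT0 hT2 (x 1) hT1
    (by linarith) ?_
  have hTeq : T = {x 0, x 1, x (N - 1)} := by
    symm
    apply Finset.eq_of_subset_of_card_le
    · intro u hu
      simp only [Finset.mem_insert, Finset.mem_singleton] at hu
      rcases hu with rfl | rfl | rfl <;> assumption
    · rw [hT3, Finset.card_insert_of_notMem, Finset.card_insert_of_notMem, Finset.card_singleton]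
      · simpa using xne 1 (N - 1) (by omega) (by omega) (by omega)
      · simp only [Finset.mem_insert, Finset.mem_singleton, not_or]
        exact ⟨xne 0 1 (by omega) (by omega) (by omega),
          xne 0 (N - 1) (by omega) (by omega) (by omega)⟩
  intro u hu
  rw [hTeq] at hu
  simp only [Finset.mem_insert, Finset.mem_singleton] at hu
  rcases hu with rfl | rfl | rfl
  · rw [det3_self_left]
  · linarith
  · rw [det3_self_right]

/-! ### Part 4: the combinatorial part of the argument -/

/-- Signed distance (scaled) to the edge line `v i`, `v (i+1)`. -/
noncomputable def bb (v : ℕ → Pt) (i : ℕ) (z : Pt) : ℝ := det3 (v i) (v (i + 1)) z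

/-- Side of the line through the origin and the midpoint of the edge `i`. -/
noncomputable def tau (v : ℕ → Pt) (i : ℕ) (z : Pt) : ℝ := det2 (mid (v i) (v (i + 1))) z

/-- The region of Steiner points serving the edge `i`. -/
def SS (v : ℕ → Pt) (ρ η : ℝ) (i : ℕ) (z : Pt) : Prop :=
  bb v i z ≤ η ∧ ¬ (bb v i z = 0 ∧ (dist z (v i) ≤ ρ ∨ dist z (v (i + 1)) ≤ ρ))

/-- The geometric facts about the point set. -/
structure Setup (k : ℕ) (P : Finset Pt) (v p : ℕ → Pt) (ρ η ε : ℝ) : Prop where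
  hk : 4 ≤ k
  hρ : 0 ≤ ρ
  hη : 0 ≤ η
  hε : 0 < ε
  perv : ∀ j, v (j + k) = v j
  perp : ∀ j, p (j + k) = p j
  memP : ∀ z, z ∈ P ↔ ∃ j, z = v j ∨ z = p j
  pdef : ∀ j, p j = (1 - ε) • mid (v j) (v (j + 1))
  pnear : ∀ j, dist (p j) (mid (v j) (v (j + 1))) ≤ ρ
  bnn : ∀ i, ∀ z ∈ convexHull ℝ (P : Set Pt), 0 ≤ bb v i z
  bp0 : ∀ i, 0 < bb v i (p i)
  bp : ∀ i j, i < j → j < i + k → η < bb v i (p j)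
  bv : ∀ i j, i + 1 < j → j < i + k → η < bb v i (v j)
  close : ∀ i j, i < j → j < i + k → ∀ z ∈ convexHull ℝ (P : Set Pt), bb v i z ≤ η →
    bb v j z ≤ η → (j = i + 1 ∧ dist z (v j) ≤ ρ) ∨ (j + 1 = i + k ∧ dist z (v i) ≤ ρ)
  tl : ∀ i z, dist z (v i) ≤ ρ → tau v i z < 0
  tr : ∀ i z, dist z (v (i + 1)) ≤ ρ → 0 < tau v i z
  trap : ∀ i l r c, l ∈ convexHull ℝ (P : Set Pt) → r ∈ convexHull ℝ (P : Set Pt) →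
    c ∈ convexHull ℝ (P : Set Pt) → dist l (v i) ≤ ρ → dist r (v (i + 1)) ≤ ρ →
    bb v i l = 0 → bb v i r = 0 → η < bb v i c →
    0 < det3 l r (p i) ∧ 0 < det3 r c (p i) ∧ 0 < det3 c l (p i)
  ori : ∀ c a b d, a < b → b < d → d < 2 * k → ¬ Exc (2 * k) a b d → ∀ x y z : Pt,
    dist x (mid (v (c + (a + 1) / 2)) (v (c + (a + 2) / 2))) ≤ ρ →
    dist y (mid (v (c + (b + 1) / 2)) (v (c + (b + 2) / 2))) ≤ ρ →
    dist z (mid (v (c + (d + 1) / 2)) (v (c + (d + 2) / 2))) ≤ ρ → 0 < det3 x y z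

section
variable {k : ℕ} {P : Finset Pt} {v p : ℕ → Pt} {ρ η ε : ℝ}

lemma per_mul {f : ℕ → Pt} (h : ∀ j, f (j + k) = f j) (n j : ℕ) : f (j + n * k) = f j := by
  induction n with
  | zero => simp
  | succ n ih => rw [Nat.succ_mul, ← add_assoc, h, ih]

lemma per_mod {f : ℕ → Pt} (h : ∀ j, f (j + k) = f j) (j : ℕ) : f j = f (j % k) := by
  conv_lhs => rw [← Nat.mod_add_div j k, Nat.mul_comm]
  exact per_mul h _ _

lemma Setup.shift (h : Setup k P v p ρ η ε) (c : ℕ) :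
    Setup k P (fun j => v (c + j)) (fun j => p (c + j)) ρ η ε where
  hk := h.hk
  hρ := h.hρ
  hη := h.hη
  hε := h.hε
  perv := fun j => by rw [← add_assoc]; exact h.perv (c + j)
  perp := fun j => by rw [← add_assoc]; exact h.perp (c + j)
  memP := by
    intro z
    rw [h.memP]
    have key : ∀ j, ∃ j', c + j' = j + c * k := fun j => by
      have := h.hk
      exact ⟨j + c * k - c, by have : c ≤ c * k := Nat.le_mul_of_pos_right c (by omega)
                               omega⟩
    constructor
    · rintro ⟨j, hj⟩
      obtain ⟨j', hj'⟩ := key j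
      refine ⟨j', ?_⟩
      rw [hj', per_mul h.perv, per_mul h.perp]
      exact hj
    · rintro ⟨j, hj⟩
      exact ⟨c + j, hj⟩
  pdef := fun j => h.pdef (c + j)
  pnear := fun j => h.pnear (c + j)
  bnn := fun j => h.bnn (c + j)
  bp0 := fun j => h.bp0 (c + j)
  bp := fun i j h1 h2 => h.bp (c + i) (c + j) (by omega) (by omega)
  bv := fun i j h1 h2 => h.bv (c + i) (c + j) (by omega) (by omega)
  close := by
    intro i j h1 h2 z hz b1 b2
    have := h.close (c + i) (c + j) (by omega) (by omega) z hz b1 b2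
    rcases this with ⟨e, d⟩ | ⟨e, d⟩
    · exact Or.inl ⟨by omega, d⟩
    · exact Or.inr ⟨by omega, d⟩
  tl := fun i => h.tl (c + i)
  tr := fun i => h.tr (c + i)
  trap := fun i => h.trap (c + i)
  ori := by
    intro c' a b d h1 h2 h3 h4 x y z hx hy hz
    simp only [← add_assoc] at hx hy hz
    exact h.ori (c + c') a b d h1 h2 h3 h4 x y z hx hy hz

lemma Setup.vP (h : Setup k P v p ρ η ε) (j : ℕ) : v j ∈ P := (h.memP _).2 ⟨j, Or.inl rfl⟩

lemma Setup.pP (h : Setup k P v p ρ η ε) (j : ℕ) : p j ∈ P := (h.memP _).2 ⟨j, Or.inr rfl⟩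

/-- Representatives of indices relative to `i`. -/
lemma Setup.rep (h : Setup k P v p ρ η ε) {z : Pt} (hz : z ∈ P) (i : ℕ) :
    ∃ j, i ≤ j ∧ j < i + k ∧ (z = v j ∨ z = p j) := by
  have hk := h.hk
  obtain ⟨j, hj⟩ := ((h.shift i).memP z).1 hz
  refine ⟨i + j % k, by omega, by have := Nat.mod_lt j (show k > 0 by omega); omega, ?_⟩
  have e1 : v (i + j) = v (i + j % k) := per_mod (f := fun j => v (i + j)) (h.shift i).perv j
  have e2 : p (i + j) = p (i + j % k) := per_mod (f := fun j => p (i + j)) (h.shift i).perp j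
  rw [← e1, ← e2]
  exact hj

lemma Setup.lowP (h : Setup k P v p ρ η ε) {z : Pt} (hz : z ∈ P) {i : ℕ} (hb : bb v i z ≤ η) :
    z = v i ∨ z = v (i + 1) ∨ z = p i := by
  obtain ⟨j, h1, h2, h3⟩ := h.rep hz i
  rcases h3 with rfl | rfl
  · by_cases e1 : j = i
    · left; rw [e1]
    by_cases e2 : j = i + 1
    · right; left; rw [e2]
    · have := h.bv i j (by omega) h2
      linarith
  · by_cases e1 : j = i
    · right; right; rw [e1]
    · have := h.bp i j (by omega) h2
      linarith

/-- The cell at the midpoint of an edge. -/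
lemma Setup.edge_cell (h : Setup k P v p ρ η ε) {St : Finset Pt} {C : Set (Finset Pt)}
    (hD : Dec P St C) (i : ℕ)
    (hst : ∀ z ∈ St, bb v i z = 0 → dist z (v i) ≤ ρ ∨ dist z (v (i + 1)) ≤ ρ) :
    ∃ W ∈ C, ∃ l ∈ W, ∃ r ∈ W, l ≠ r ∧ bb v i l = 0 ∧ bb v i r = 0 ∧ (l = v i ∨ l ∈ St) ∧
      (r = v (i + 1) ∨ r ∈ St) ∧ ∀ c ∈ W, bb v i c ≤ η ∧ (c = l ∨ c = r ∨ c = p i ∨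
        (c ∈ St ∧ 0 < bb v i c)) := by
  have hcP : Convex ℝ (convexHull ℝ (P : Set Pt)) := convex_convexHull _ _
  have hvP : ∀ j, v j ∈ convexHull ℝ (P : Set Pt) := fun j => subset_convexHull ℝ _ (h.vP j)
  have hmP : mid (v i) (v (i + 1)) ∈ convexHull ℝ (P : Set Pt) :=
    hcP (hvP _) (hvP _) (by norm_num) (by norm_num) (by norm_num)
  obtain ⟨W, hW, hmW⟩ := hD.cov _ hmP
  have hsub : ∀ c ∈ W, c ∈ convexHull ℝ (P : Set Pt) :=
    fun c hc => hD.sub W hW (subset_convexHull ℝ _ hc)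
  have hnn : ∀ c ∈ W, 0 ≤ bb v i c := fun c hc => h.bnn i c (hsub c hc)
  have hm0 : bb v i (mid (v i) (v (i + 1))) = 0 := by
    unfold bb; rw [det3_mid, det3_self_left, det3_self_right]; norm_num
  -- classification of vertices on the line
  have cls : ∀ c ∈ W, bb v i c = 0 → dist c (v i) ≤ ρ ∧ (c = v i ∨ c ∈ St) ∨
      dist c (v (i + 1)) ≤ ρ ∧ (c = v (i + 1) ∨ c ∈ St) := by
    intro c hc hc0
    rcases hD.vert W hW c hc with hcP | hcS
    · rcases h.lowP hcP (i := i) (by rw [hc0]; exact h.hη) with rfl | rfl | rfl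
      · left; simpa using h.hρ
      · right; simpa using h.hρ
      · have := h.bp0 i; linarith
    · rcases hst c hcS hc0 with d | d
      · left; exact ⟨d, Or.inr hcS⟩
      · right; exact ⟨d, Or.inr hcS⟩
  have hface := face_mem (a := v i) (b := v (i + 1)) hnn hmW hm0
  have ht0 : tau v i (mid (v i) (v (i + 1))) = 0 := by
    simp only [tau, det2]; ring
  have taulin : IsLinearMap ℝ (tau v i) := by
    constructor
    · intro a b; simp [tau, det2]; ring
    · intro a b; simp [tau, det2]; ring
  have exl : ∃ l ∈ W, bb v i l = 0 ∧ tau v i l ≤ 0 := by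
    by_contra hcon
    push Not at hcon
    have hs : {w : Pt | w ∈ W ∧ det3 (v i) (v (i + 1)) w = 0} ⊆
        {z | 0 < tau v i z} := by
      intro z hz
      exact hcon z hz.1 hz.2
    have := convexHull_min hs (convex_halfSpace_gt taulin 0) hface
    exact absurd ht0 (ne_of_gt this)
  have exr : ∃ r ∈ W, bb v i r = 0 ∧ 0 ≤ tau v i r := by
    by_contra hcon
    push Not at hcon
    have hs : {w : Pt | w ∈ W ∧ det3 (v i) (v (i + 1)) w = 0} ⊆
        {z | tau v i z < 0} := by
      intro z hz
      exact hcon z hz.1 hz.2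
    have := convexHull_min hs (convex_halfSpace_lt taulin 0) hface
    exact absurd ht0 (ne_of_lt this)
  obtain ⟨l, hl, hl0, hlt⟩ := exl
  obtain ⟨r, hr, hr0, hrt⟩ := exr
  have cl : dist l (v i) ≤ ρ ∧ (l = v i ∨ l ∈ St) := by
    rcases cls l hl hl0 with hh | hh
    · exact hh
    · have := h.tr i l hh.1; linarith
  have cr : dist r (v (i + 1)) ≤ ρ ∧ (r = v (i + 1) ∨ r ∈ St) := by
    rcases cls r hr hr0 with hh | hh
    · have := h.tl i r hh.1; linarith
    · exact hh
  have hlr : l ≠ r := by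
    intro e
    have h1 := h.tl i l cl.1
    have h2 := h.tr i r cr.1
    rw [e] at h1
    linarith
  have hle : ∀ c ∈ W, bb v i c ≤ η := by
    intro c hc
    by_contra hcon
    push Not at hcon
    obtain ⟨t1, t2, t3⟩ := h.trap i l r c (hsub l hl) (hsub r hr) (hsub c hc) cl.1 cr.1 hl0 hr0 hcon
    exact hD.noint W hW (p i) (h.pP i) (tri_interior (convex_convexHull ℝ _)
      (subset_convexHull ℝ _ hl) (subset_convexHull ℝ _ hr) (subset_convexHull ℝ _ hc) t1 t2 t3)
  refine ⟨W, hW, l, hl, r, hr, hlr, hl0, hr0, cl.2, cr.2, ?_⟩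
  intro c hc
  refine ⟨hle c hc, ?_⟩
  by_cases e1 : c = l
  · exact Or.inl e1
  by_cases e2 : c = r
  · exact Or.inr (Or.inl e2)
  have hcpos : bb v i c ≠ 0 := by
    intro hc0
    refine hD.noncol W hW l hl r hr c hc hlr (Ne.symm e1) (Ne.symm e2) ?_
    have hp := h.bp0 i
    have hne : v i ≠ v (i + 1) := by
      intro e
      have h1 := h.tl i (v i) (by simpa using h.hρ)
      have h2 := h.tr i (v i) (by rw [← e]; simpa using h.hρ)
      linarith
    simp only [bb, det3_eq] at hl0 hr0 hc0
    rw [det3_eq]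
    have key : ∀ t : ℝ × ℝ, t = ((v (i + 1)).1 - (v i).1, (v (i + 1)).2 - (v i).2) → t ≠ 0 := by
      rintro t rfl e
      simp only [Prod.mk_eq_zero] at e
      exact hne (Prod.ext (by linarith [e.1]) (by linarith [e.2]))
    have key2 := key _ rfl
    by_cases f1 : (v (i + 1)).1 - (v i).1 = 0
    · have f2 : (v (i + 1)).2 - (v i).2 ≠ 0 := by
        intro f2; exact key2 (by rw [f1, f2]; rfl)
      apply mul_left_cancel₀ f2
      generalize (v (i + 1)) = B at *
      generalize (v i) = A at *
      linear_combination (c.2 - r.2) * hl0 + (l.2 - c.2) * hr0 + (r.2 - l.2) * hc0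
    · apply mul_left_cancel₀ f1
      generalize (v (i + 1)) = B at *
      generalize (v i) = A at *
      linear_combination (c.1 - r.1) * hl0 + (l.1 - c.1) * hr0 + (r.1 - l.1) * hc0
  rcases hD.vert W hW c hc with hcP | hcS
  · rcases h.lowP hcP (hle c hc) with e | e | e
    · exact absurd (by rw [e]; exact det3_self_left _ _) hcpos
    · exact absurd (by rw [e]; exact det3_self_right _ _) hcpos
    · exact Or.inr (Or.inr (Or.inl e))
  · exact Or.inr (Or.inr (Or.inr ⟨hcS, lt_of_le_of_ne (hnn c hc) (Ne.symm hcpos)⟩))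

/-- An unserved edge carries a triangle. -/
lemma Setup.unserved (h : Setup k P v p ρ η ε) {St : Finset Pt} {C : Set (Finset Pt)}
    (hD : Dec P St C) (i : ℕ) (hst : ∀ z ∈ St, ¬ SS v ρ η i z) :
    ∃ W ∈ C, W.card = 3 ∧ p i ∈ W ∧ (∀ c ∈ W, bb v i c ≤ η) ∧
      ∃ l ∈ W, ∃ r ∈ W, bb v i l = 0 ∧ bb v i r = 0 ∧ (l = v i ∨ l ∈ St) ∧
      (r = v (i + 1) ∨ r ∈ St) := by
  classical
  obtain ⟨W, hW, l, hl, r, hr, hlr, hl0, hr0, cl, cr, hall⟩ := h.edge_cell hD i (by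
    intro z hz hz0
    by_contra hcon
    exact hst z hz ⟨by rw [hz0]; exact h.hη, fun hh => hcon hh.2⟩)
  have hsub : W ⊆ {l, r, p i} := by
    intro c hc
    simp only [Finset.mem_insert, Finset.mem_singleton]
    obtain ⟨h1, h2⟩ := hall c hc
    rcases h2 with h2 | h2 | h2 | ⟨h2, h3⟩
    · exact Or.inl h2
    · exact Or.inr (Or.inl h2)
    · exact Or.inr (Or.inr h2)
    · exact absurd ⟨h1, fun hh => by linarith [hh.1]⟩ (hst c h2)
  have h3 : ({l, r, p i} : Finset Pt).card ≤ 3 := Finset.card_le_three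
  have hc3 : W.card = 3 := by
    rcases hD.kind W hW with hq | hq
    · have := Finset.card_le_card hsub
      have := hq.1
      omega
    · exact hq
  have heq : W = {l, r, p i} := Finset.eq_of_subset_of_card_le hsub (by omega)
  refine ⟨W, hW, hc3, by rw [heq]; simp, fun c hc => (hall c hc).1, l, hl, r, hr, hl0, hr0, cl, cr⟩

lemma quadR {W : Finset Pt} (hq : IsQuad W) {A B p s : Pt} (hA : A ∈ W) (hB : B ∈ W) (hp : p ∈ W)
    (hs : s ∈ W) (hps : p ≠ s) (p1 : 0 < det3 A B p) (s1 : 0 < det3 A B s)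
    (hsum : 0 < det3 s p A + det3 s p B) : det3 A p s < 0 ∧ 0 < det3 p B s := by
  obtain ⟨n1, n2, n3⟩ := ne_of_det3_pos p1
  obtain ⟨m1, m2, m3⟩ := ne_of_det3_pos s1
  have e1 : det3 s p A = - det3 A p s := by rw [det3_rev]
  have e2 : det3 s p B = det3 p B s := by rw [det3_rot]
  constructor
  · by_contra hcon
    refine hq.2 A hA B hB s hs p hp n1 m2 n2 m3 n3 hps.symm s1 p1.le ?_ ?_
    · rw [det3_cyc]; linarith
    · rw [det3_rot]; linarith
  · by_contra hcon
    refine hq.2 A hA B hB p hp s hs n1 n2 m2 n3 m3 hps p1 s1.le ?_ ?_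
    · rw [det3_swap]; linarith
    · rw [det3_swap]; linarith

lemma quadL {W : Finset Pt} (hq : IsQuad W) {A B p s : Pt} (hA : A ∈ W) (hB : B ∈ W) (hp : p ∈ W)
    (hs : s ∈ W) (hps : p ≠ s) (p1 : 0 < det3 A B p) (s1 : 0 < det3 A B s)
    (hsum : det3 s p A + det3 s p B < 0) : det3 s p B < 0 ∧ 0 < det3 s A p := by
  obtain ⟨n1, n2, n3⟩ := ne_of_det3_pos p1
  obtain ⟨m1, m2, m3⟩ := ne_of_det3_pos s1
  have e1 : det3 s p A = - det3 s A p := by rw [det3_flip]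
  have e2 : det3 s p B = det3 p B s := by rw [det3_rot]
  have e3 : det3 s A p = det3 A p s := by rw [det3_rot]
  constructor
  · by_contra hcon
    refine hq.2 A hA B hB s hs p hp n1 m2 n2 m3 n3 hps.symm s1 p1.le ?_ ?_
    · rw [det3_cyc]; linarith
    · linarith
  · by_contra hcon
    refine hq.2 A hA B hB p hp s hs n1 n2 m2 n3 m3 hps p1 s1.le ?_ ?_
    · rw [det3_swap]; linarith
    · rw [det3_swap]; linarith

lemma Setup.sum_tau (h : Setup k P v p ρ η ε) (i : ℕ) (s : Pt) :
    det3 s (p i) (v i) + det3 s (p i) (v (i + 1)) = 2 * ε * tau v i s := by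
  rw [h.pdef]
  simp only [det3_eq, tau, det2, mid, Prod.fst_add, Prod.snd_add, Prod.smul_fst, Prod.smul_snd,
    smul_eq_mul]
  ring

end

section
variable {k : ℕ} {P : Finset Pt} {v p : ℕ → Pt} {ρ η ε : ℝ}

lemma Setup.adj (h : Setup k P v p ρ η ε) {z : Pt} (hz : z ∈ convexHull ℝ (P : Set Pt))
    {i j : ℕ} (hi : i < k) (hj : j < k) (hij : i ≠ j) (b1 : bb v i z ≤ η) (b2 : bb v j z ≤ η) :
    (j = i + 1 ∧ dist z (v j) ≤ ρ) ∨ (i = j + 1 ∧ dist z (v i) ≤ ρ) ∨ (i = 0 ∧ j + 1 = k) ∨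
      (j = 0 ∧ i + 1 = k) := by
  rcases lt_or_gt_of_ne hij with hlt | hlt
  · rcases h.close i j hlt (by omega) z hz b1 b2 with hh | hh
    · exact Or.inl hh
    · exact Or.inr (Or.inr (Or.inl (by omega)))
  · rcases h.close j i hlt (by omega) z hz b2 b1 with hh | hh
    · exact Or.inr (Or.inl hh)
    · exact Or.inr (Or.inr (Or.inr (by omega)))

open Classical in
lemma Setup.le_two (h : Setup k P v p ρ η ε) {z : Pt} (hz : z ∈ convexHull ℝ (P : Set Pt))
    (I : Finset ℕ) (hI : ∀ i ∈ I, i < k) : (I.filter (fun i => SS v ρ η i z)).card ≤ 2 := by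
  by_contra hcon
  push Not at hcon
  obtain ⟨a, b, c, ha, hb, hc, hab, hac, hbc⟩ := Finset.two_lt_card_iff.1 hcon
  simp only [Finset.mem_filter] at ha hb hc
  have hk := h.hk
  have h1 := h.adj hz (hI a ha.1) (hI b hb.1) hab ha.2.1 hb.2.1
  have h2 := h.adj hz (hI a ha.1) (hI c hc.1) hac ha.2.1 hc.2.1
  have h3 := h.adj hz (hI b hb.1) (hI c hc.1) hbc hb.2.1 hc.2.1
  have a' := hI a ha.1
  have b' := hI b hb.1
  have c' := hI c hc.1
  omega

open Classical in
lemma Setup.base (h : Setup k P v p ρ η ε) {St : Finset Pt} {C : Set (Finset Pt)}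
    (hD : Dec P St C) (hcard : 2 * St.card < k) (h0 : ∀ z ∈ St, ¬ SS v ρ η 0 z) : False := by
  have hk := h.hk
  obtain ⟨T, hT, hT3, hTp, hTle, l, hl, r, hr, hl0, hr0, cl, cr⟩ := h.unserved hD 0 h0
  have hpk : p k = p 0 := by have := h.perp 0; rwa [zero_add] at this
  have hvk : v k = v 0 := by have := h.perv 0; rwa [zero_add] at this
  have hvk1 : v (k + 1) = v 1 := by have := h.perv 1; rwa [add_comm] at this
  have p0far : ∀ i, 1 ≤ i → i < k → η < bb v i (p 0) := by
    intro i h1 h2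
    rw [← hpk]; exact h.bp i k h2 (by omega)
  -- all other edges are served
  have served : ∀ i, 1 ≤ i → i < k → ∃ z ∈ St, SS v ρ η i z := by
    intro i h1 h2
    by_contra hcon
    push Not at hcon
    obtain ⟨W, hW, hW3, hWp, hWle, -⟩ := h.unserved hD i hcon
    obtain rfl := hD.tri_unique W hW T hT hW3 hT3
    have := hWle _ hTp
    linarith [p0far i h1 h2]
  -- double counting
  have hdc : ∑ i ∈ Finset.Ico 1 k, (St.filter (fun z => SS v ρ η i z)).card =
      ∑ z ∈ St, ((Finset.Ico 1 k).filter (fun i => SS v ρ η i z)).card :=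
    Finset.sum_card_bipartiteAbove_eq_sum_card_bipartiteBelow (fun i z => SS v ρ η i z)
  have lo : ∀ i ∈ Finset.Ico 1 k, 1 ≤ (St.filter (fun z => SS v ρ η i z)).card := by
    intro i hi
    rw [Finset.mem_Ico] at hi
    obtain ⟨z, hz, hz2⟩ := served i hi.1 hi.2
    exact Finset.card_pos.2 ⟨z, Finset.mem_filter.2 ⟨hz, hz2⟩⟩
  have hi' : ∀ z ∈ St, ((Finset.Ico 1 k).filter (fun i => SS v ρ η i z)).card ≤ 2 := by
    intro z hz
    exact h.le_two (hD.stv z hz) _ (fun i hi => (Finset.mem_Ico.1 hi).2)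
  have slo := Finset.sum_le_sum lo
  have shi := Finset.sum_le_sum hi'
  have c1 : ∑ i ∈ Finset.Ico 1 k, 1 = k - 1 := by simp
  have c2 : ∑ z ∈ St, 2 = 2 * St.card := by simp [mul_comm]
  have eq1 : ∀ i ∈ Finset.Ico 1 k, 1 = (St.filter (fun z => SS v ρ η i z)).card :=
    (Finset.sum_eq_sum_iff_of_le lo).1 (by omega)
  have eq2 : ∀ z ∈ St, ((Finset.Ico 1 k).filter (fun i => SS v ρ η i z)).card = 2 :=
    (Finset.sum_eq_sum_iff_of_le hi').1 (by omega)
  have uniq : ∀ i, 1 ≤ i → i < k → ∀ z ∈ St, ∀ z' ∈ St, SS v ρ η i z → SS v ρ η i z' → z = z' := by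
    intro i h1 h2 z hz z' hz' s1 s2
    have := eq1 i (Finset.mem_Ico.2 ⟨h1, h2⟩)
    exact Finset.card_le_one.1 this.symm.le z (Finset.mem_filter.2 ⟨hz, s1⟩) z'
      (Finset.mem_filter.2 ⟨hz', s2⟩)
  -- each Steiner point sits at a vertex
  have corner : ∀ z ∈ St, ∃ m, 1 ≤ m ∧ m + 1 < k ∧ SS v ρ η m z ∧ SS v ρ η (m + 1) z ∧
      dist z (v (m + 1)) ≤ ρ := by
    intro z hz
    obtain ⟨a, b, hab, hset⟩ := Finset.card_eq_two.1 (eq2 z hz)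
    have ha : a ∈ (Finset.Ico 1 k).filter (fun i => SS v ρ η i z) := by rw [hset]; simp
    have hb : b ∈ (Finset.Ico 1 k).filter (fun i => SS v ρ η i z) := by rw [hset]; simp
    simp only [Finset.mem_filter, Finset.mem_Ico] at ha hb
    rcases h.adj (hD.stv z hz) ha.1.2 hb.1.2 hab ha.2.1 hb.2.1 with hh | hh | hh | hh
    · obtain ⟨rfl, hd⟩ := hh
      exact ⟨a, ha.1.1, hb.1.2, ha.2, hb.2, hd⟩
    · obtain ⟨rfl, hd⟩ := hh
      exact ⟨b, hb.1.1, ha.1.2, hb.2, ha.2, hd⟩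
    · omega
    · omega
  have offline : ∀ z ∈ St, ∀ i < k, bb v i z ≠ 0 := by
    intro z hz i hi e
    obtain ⟨m, h1, h2, s1, s2, hd⟩ := corner z hz
    have n1 : i ≠ m := by
      rintro rfl; exact s1.2 ⟨e, Or.inr hd⟩
    have n2 : i ≠ m + 1 := by
      rintro rfl; exact s2.2 ⟨e, Or.inl hd⟩
    have e' : bb v i z ≤ η := by rw [e]; exact h.hη
    have a1 := h.adj (hD.stv z hz) hi (by omega) n1 e' s1.1
    have a2 := h.adj (hD.stv z hz) hi (by omega) n2 e' s2.1
    omega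
  have offpos : ∀ z ∈ St, ∀ i < k, 0 < bb v i z := fun z hz i hi =>
    lt_of_le_of_ne (h.bnn i z (hD.stv z hz)) (Ne.symm (offline z hz i hi))
  -- the triangle
  have hl' : l = v 0 := by
    rcases cl with hh | hh
    · exact hh
    · exact absurd hl0 (offline l hh 0 (by omega))
  have hr' : r = v 1 := by
    rcases cr with hh | hh
    · exact hh
    · exact absurd hr0 (offline r hh 0 (by omega))
  subst hl'
  subst hr'
  -- the modified vertices
  let R : ℕ → Prop := fun m => ∃ z ∈ St, SS v ρ η (m - 1) z ∧ SS v ρ η m z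
  let y : ℕ → Pt := fun m => if hm : R m then hm.choose else v m
  have yR : ∀ m, R m → y m ∈ St ∧ SS v ρ η (m - 1) (y m) ∧ SS v ρ η m (y m) := by
    intro m hm
    have : y m = hm.choose := dif_pos hm
    rw [this]
    exact hm.choose_spec
  have ynR : ∀ m, ¬ R m → y m = v m := fun m hm => dif_neg hm
  have R1 : ¬ R 1 := by
    rintro ⟨z, hz, s1, -⟩
    exact h0 z hz s1
  have Rk : ¬ R k := by
    rintro ⟨z, hz, -, s1⟩
    apply h0 z hz
    unfold SS bb at *
    rw [hvk, hvk1] at s1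
    exact s1
  have Rne : ∀ m, 1 ≤ m → m ≤ k → R m → 2 ≤ m ∧ m < k := by
    intro m h1 h2 hm
    refine ⟨?_, ?_⟩
    · by_contra hcon
      have : m = 1 := by omega
      subst this; exact R1 hm
    · by_contra hcon
      have : m = k := by omega
      rw [this] at hm; exact Rk hm
  have ynear : ∀ m, 1 ≤ m → m ≤ k → dist (y m) (v m) ≤ ρ := by
    intro m h1 h2
    by_cases hm : R m
    · obtain ⟨e1, e2, e3⟩ := yR m hm
      obtain ⟨f1, f2⟩ := Rne m h1 h2 hm
      have := h.adj (hD.stv _ e1) (show m - 1 < k by omega) f2 (by omega) e2.1 e3.1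
      rcases this with hh | hh | hh | hh
      · exact hh.2
      · omega
      · omega
      · omega
    · rw [ynR m hm]; simpa using h.hρ
  -- edge cells
  have cells : ∀ i, 1 ≤ i → i < k → ∃ W ∈ C, ∃ s ∈ St, v i ∈ W ∧ v (i + 1) ∈ W ∧ p i ∈ W ∧ s ∈ W ∧
      SS v ρ η i s ∧ (∀ u ∈ W, u = v i ∨ u = v (i + 1) ∨ u = p i ∨ u = s) ∧ IsQuad W := by
    intro i h1 h2
    obtain ⟨s, hs, hss⟩ := served i h1 h2
    obtain ⟨W, hW, l', hl', r', hr', hlr, hl0', hr0', cl', cr', hall⟩ := h.edge_cell hD i (by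
      intro z hz hz0
      exact absurd hz0 (offline z hz i h2))
    have el : l' = v i := by
      rcases cl' with hh | hh
      · exact hh
      · exact absurd hl0' (offline l' hh i h2)
    have er : r' = v (i + 1) := by
      rcases cr' with hh | hh
      · exact hh
      · exact absurd hr0' (offline r' hh i h2)
    subst el
    subst er
    have hsub : W ⊆ {v i, v (i + 1), p i, s} := by
      intro c hc
      simp only [Finset.mem_insert, Finset.mem_singleton]
      obtain ⟨g1, g2⟩ := hall c hc
      rcases g2 with g2 | g2 | g2 | ⟨g2, g3⟩
      · exact Or.inl g2
      · exact Or.inr (Or.inl g2)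
      · exact Or.inr (Or.inr (Or.inl g2))
      · exact Or.inr (Or.inr (Or.inr
          (uniq i h1 h2 c g2 s hs ⟨g1, fun hh => by linarith [hh.1]⟩ hss)))
    have hq : IsQuad W := by
      rcases hD.kind W hW with hq | hq
      · exact hq
      · obtain rfl := hD.tri_unique W hW T hT hq hT3
        have := (hall _ hTp).1
        linarith [p0far i h1 h2]
    have h4 : ({v i, v (i + 1), p i, s} : Finset Pt).card ≤ 4 := Finset.card_le_four
    have heq : W = {v i, v (i + 1), p i, s} :=
      Finset.eq_of_subset_of_card_le hsub (by rw [hq.1]; exact h4)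
    refine ⟨W, hW, s, hs, hl', hr', by rw [heq]; simp, by rw [heq]; simp, hss, ?_, hq⟩
    intro u hu
    have := hsub hu
    simpa only [Finset.mem_insert, Finset.mem_singleton] using this
  -- shape of the edge cells
  have shape : ∀ i, ∃ W, 1 ≤ i → i < k → W ∈ C ∧ (v i ∈ W ∧ v (i + 1) ∈ W ∧ p i ∈ W ∧
      y i ∈ W ∧ y (i + 1) ∈ W) ∧ det3 (y i) (p i) (y (i + 1)) < 0 ∧
      (∃ hd ∈ convexHull ℝ (P : Set Pt), 0 < det3 (y (i + 1)) (y i) hd) ∧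
      (∀ u ∈ W, 0 ≤ det3 (p i) (y i) u) ∧ (∀ u ∈ W, 0 ≤ det3 (y (i + 1)) (p i) u) := by
    intro i
    by_cases hi : 1 ≤ i ∧ i < k
    swap
    · exact ⟨∅, fun a b => absurd ⟨a, b⟩ hi⟩
    obtain ⟨h1, h2⟩ := hi
    obtain ⟨W, hW, s, hs, w1, w2, w3, w4, hss, hall, hq⟩ := cells i h1 h2
    refine ⟨W, fun _ _ => ?_⟩
    have hps : p i ≠ s := by
      intro e; exact hD.disj s hs (e ▸ h.pP i)
    have b1 : 0 < det3 (v i) (v (i + 1)) (p i) := h.bp0 i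
    have b2 : 0 < det3 (v i) (v (i + 1)) s := offpos s hs i h2
    have hsum := h.sum_tau i s
    obtain ⟨m, m1, m2, s1, s2, hd⟩ := corner s hs
    have hm : i = m ∨ i = m + 1 := by
      by_contra hcon
      have a1 := h.adj (hD.stv s hs) h2 (show m < k by omega) (by omega) hss.1 s1.1
      have a2 := h.adj (hD.stv s hs) h2 m2 (by omega) hss.1 s2.1
      omega
    have hvP : ∀ j, v j ∈ convexHull ℝ (P : Set Pt) := fun j => subset_convexHull ℝ _ (h.vP j)
    rcases hm with rfl | rfl
    · -- the Steiner point is at the right end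
      have Ri1 : R (i + 1) := ⟨s, hs, s1, s2⟩
      have nRi : ¬ R i := by
        rintro ⟨z, hz, t1, t2⟩
        have := uniq i h1 h2 z hz s hs t2 s1
        subst this
        have a1 := h.adj (hD.stv z hz) (show i - 1 < k by omega) m2 (by omega) t1.1 s2.1
        have a2 := Rne i h1 h2.le ⟨z, hz, t1, t2⟩
        omega
      have ey : y (i + 1) = s := by
        obtain ⟨t1, t2, t3⟩ := yR (i + 1) Ri1
        exact uniq i h1 h2 _ t1 s hs t2 s1
      rw [ey, ynR i nRi]
      obtain ⟨q1, q2⟩ := quadR hq w1 w2 w3 w4 hps b1 b2 (by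
        rw [hsum]; exact mul_pos (mul_pos two_pos h.hε) (h.tr i s hd))
      refine ⟨hW, ⟨w1, w2, w3, w1, w4⟩, q1, ⟨v (i + 1), hvP _, by rw [det3_rot]; exact b2⟩, ?_, ?_⟩
      · intro u hu
        rcases hall u hu with rfl | rfl | rfl | rfl
        · rw [det3_self_right]
        · rw [det3_rot]; exact b1.le
        · rw [det3_self_left]
        · rw [det3_swap]; linarith
      · intro u hu
        rcases hall u hu with rfl | rfl | rfl | rfl
        · rw [det3_rev]; linarith
        · rw [det3_rot]; linarith
        · rw [det3_self_right]
        · rw [det3_self_left]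
    · -- the Steiner point is at the left end
      have Ri1 : R (m + 1) := ⟨s, hs, s1, s2⟩
      have nRi : ¬ R (m + 1 + 1) := by
        rintro ⟨z, hz, t1, t2⟩
        have := uniq (m + 1) h1 h2 z hz s hs t1 s2
        subst this
        have a2 := Rne (m + 1 + 1) (by omega) (by omega) ⟨z, hz, t1, t2⟩
        have a1 := h.adj (hD.stv z hz) (show m < k by omega) a2.2 (by omega) s1.1 t2.1
        omega
      have ey : y (m + 1) = s := by
        obtain ⟨t1, t2, t3⟩ := yR (m + 1) Ri1
        exact uniq (m + 1) h1 h2 _ t1 s hs t3 s2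
      rw [ey, ynR _ nRi]
      obtain ⟨q1, q2⟩ := quadL hq w1 w2 w3 w4 hps b1 b2 (by
        rw [hsum]; exact mul_neg_of_pos_of_neg (mul_pos two_pos h.hε) (h.tl _ s hd))
      refine ⟨hW, ⟨w1, w2, w3, w4, w2⟩, q1, ⟨v (m + 1), hvP _, by rw [det3_cyc]; exact b2⟩, ?_, ?_⟩
      · intro u hu
        rcases hall u hu with rfl | rfl | rfl | rfl
        · rw [det3_rot]; exact q2.le
        · rw [det3_swap]; linarith
        · rw [det3_self_left]
        · rw [det3_self_right]
      · intro u hu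
        rcases hall u hu with rfl | rfl | rfl | rfl
        · rw [det3_cyc]; exact b1.le
        · rw [det3_self_left]
        · rw [det3_self_right]
        · rw [det3_rev]; linarith
  choose EE hEE using shape
  let x : ℕ → Pt := fun t => if t % 2 = 0 then p (t / 2) else y ((t + 1) / 2)
  have xe : ∀ j, x (2 * j) = p j := by
    intro j
    have : x (2 * j) = p (2 * j / 2) := if_pos (by omega)
    rw [this]; congr 1; omega
  have xo : ∀ j, x (2 * j + 1) = y (j + 1) := by
    intro j
    have : x (2 * j + 1) = y ((2 * j + 1 + 1) / 2) := if_neg (by omega)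
    rw [this]; congr 1; omega
  have xnear : ∀ t, t < 2 * k → dist (x t) (mid (v (0 + (t + 1) / 2)) (v (0 + (t + 2) / 2))) ≤ ρ := by
    intro t ht
    obtain ⟨j, hj | hj⟩ : ∃ j, t = 2 * j ∨ t = 2 * j + 1 := ⟨t / 2, by omega⟩
    · subst hj
      rw [xe, show 0 + (2 * j + 1) / 2 = j by omega, show 0 + (2 * j + 2) / 2 = j + 1 by omega]
      exact h.pnear j
    · subst hj
      rw [xo, show 0 + (2 * j + 1 + 1) / 2 = j + 1 by omega,
        show 0 + (2 * j + 1 + 2) / 2 = j + 1 by omega]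
      have : mid (v (j + 1)) (v (j + 1)) = v (j + 1) := by
        simp only [mid]; rw [← add_smul]; norm_num
      rw [this]
      exact ynear (j + 1) (by omega) (by omega)
  have y1 : y 1 = v 1 := ynR 1 R1
  have yk : y k = v 0 := by rw [ynR k Rk, hvk]
  have xlast : x (2 * k - 1) = v 0 := by
    have := xo (k - 1)
    rw [show 2 * (k - 1) + 1 = 2 * k - 1 by omega, show k - 1 + 1 = k by omega, yk] at this
    exact this
  have x0 : x 0 = p 0 := xe 0
  have x1 : x 1 = v 1 := by have := xo 0; rw [zero_add, y1] at this; exact this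
  refine ear hD (N := 2 * k) (by omega) (by omega) x (fun a => EE ((a + 1) / 2)) T ?_ ?_ ?_ ?_ hT hT3
    (x0 ▸ hTp) (x1 ▸ hr) (xlast ▸ hl) ?_
  · intro a b c hab hbc hc hex
    exact h.ori 0 a b c hab hbc hc hex _ _ _ (xnear a (by omega)) (xnear b (by omega)) (xnear c hc)
  · intro a b c hab hbc hc hex
    rcases hex with ⟨e1, rfl, rfl⟩ | ⟨rfl, rfl, e⟩
    · obtain ⟨j, rfl⟩ : ∃ j, a = 2 * j + 1 := ⟨a / 2, by omega⟩
      obtain ⟨-, -, g, -⟩ := hEE (j + 1) (by omega) (by omega)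
      rw [show 2 * j + 1 + 1 = 2 * (j + 1) by ring, show 2 * j + 1 + 2 = 2 * (j + 1) + 1 by ring,
        xo, xe, xo]
      exact g
    · have : c = 2 * k - 1 := by omega
      rw [this, xlast, x0, x1, det3_rev]
      have := h.bp0 0
      unfold bb at this
      rw [zero_add] at this
      linarith
  · intro t ht
    obtain ⟨j, hj | hj⟩ : ∃ j, t = 2 * j ∨ t = 2 * j + 1 := ⟨t / 2, by omega⟩
    · subst hj
      rw [xe]; exact subset_convexHull ℝ _ (h.pP j)
    · subst hj
      rw [xo]
      by_cases hm : R (j + 1)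
      · exact hD.stv _ (yR _ hm).1
      · rw [ynR _ hm]; exact subset_convexHull ℝ _ (h.vP _)
  · intro a ha haN
    obtain ⟨j, rfl⟩ : ∃ j, a = 2 * j + 1 := ⟨a / 2, by omega⟩
    obtain ⟨g1, ⟨g2, g3, g4, g5, g6⟩, g7, g8, g9, g10⟩ := hEE (j + 1) (by omega) (by omega)
    rw [show (2 * j + 1 + 1) / 2 = j + 1 by omega]
    rw [show 2 * j + 1 + 1 = 2 * (j + 1) by ring, show 2 * j + 1 + 2 = 2 * (j + 1) + 1 by ring,
        xo, xe, xo]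
    exact ⟨g1, g5, g4, g6, g8, g9, g10⟩
  · intro W hW z hz
    rcases hD.vert W hW z hz with hzP | hzS
    · obtain ⟨j, j1, j2, rfl | rfl⟩ := h.rep hzP 1
      · by_cases hm : R j
        · obtain ⟨f1, f2⟩ := Rne j j1 (by omega) hm
          obtain ⟨i, rfl⟩ : ∃ i, j = i + 1 := ⟨j - 1, by omega⟩
          right
          obtain ⟨g1, ⟨g2, g3, g4, g5, g6⟩, -⟩ := hEE i (by omega) (by omega)
          obtain ⟨k1, ⟨k2, k3, k4, k5, k6⟩, -⟩ := hEE (i + 1) (by omega) (by omega)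
          obtain ⟨t1, t2, t3⟩ := yR (i + 1) hm
          have hsub : ∀ u ∈ W, u ∈ convexHull ℝ (P : Set Pt) :=
            fun u hu => hD.sub W hW (subset_convexHull ℝ _ hu)
          rcases hidden_cell hD hW g1 k1 hz g2 g3 g6 k2 k3 k5 (offpos _ t1 i (by omega))
            (offpos _ t1 (i + 1) f2) (fun u hu => h.bnn i u (hsub u hu))
            (fun u hu => h.bnn (i + 1) u (hsub u hu)) with hh | hh
          · refine ⟨2 * (i - 1) + 1, by omega, by omega, ?_⟩
            rw [show (2 * (i - 1) + 1 + 1) / 2 = i by omega]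
            exact hh
          · refine ⟨2 * i + 1, by omega, by omega, ?_⟩
            rw [show (2 * i + 1 + 1) / 2 = i + 1 by omega]
            exact hh
        · left
          refine ⟨2 * (j - 1) + 1, by omega, ?_⟩
          rw [xo, show j - 1 + 1 = j by omega, ynR j hm]
      · left
        by_cases hjk : j < k
        · exact ⟨2 * j, by omega, (xe j).symm⟩
        · have : j = k := by omega
          exact ⟨0, by omega, by rw [this, hpk, x0]⟩
    · left
      obtain ⟨m, m1, m2, s1, s2, hd⟩ := corner z hzS
      refine ⟨2 * m + 1, by omega, ?_⟩
      rw [xo]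
      obtain ⟨t1, t2, t3⟩ := yR (m + 1) ⟨z, hzS, s1, s2⟩
      exact uniq (m + 1) (by omega) m2 z hzS _ t1 s2 t3

open Classical in
/-- The lower bound. -/
lemma Setup.bound (h : Setup k P v p ρ η ε) {St : Finset Pt} {C : Set (Finset Pt)}
    (hD : Dec P St C) : k ≤ 2 * St.card := by
  by_contra hcard
  push Not at hcard
  have hk := h.hk
  obtain ⟨c, hc, hcS⟩ : ∃ c < k, ∀ z ∈ St, ¬ SS v ρ η c z := by
    by_contra hcon
    push Not at hcon
    have hdc : ∑ i ∈ Finset.range k, (St.filter (fun z => SS v ρ η i z)).card =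
        ∑ z ∈ St, ((Finset.range k).filter (fun i => SS v ρ η i z)).card :=
      Finset.sum_card_bipartiteAbove_eq_sum_card_bipartiteBelow (fun i z => SS v ρ η i z)
    have lo : ∀ i ∈ Finset.range k, 1 ≤ (St.filter (fun z => SS v ρ η i z)).card := by
      intro i hi
      rw [Finset.mem_range] at hi
      obtain ⟨z, hz, hz2⟩ := hcon i hi
      exact Finset.card_pos.2 ⟨z, Finset.mem_filter.2 ⟨hz, hz2⟩⟩
    have hi' : ∀ z ∈ St, ((Finset.range k).filter (fun i => SS v ρ η i z)).card ≤ 2 := by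
      intro z hz
      exact h.le_two (hD.stv z hz) _ (fun i hi => Finset.mem_range.1 hi)
    have slo := Finset.sum_le_sum lo
    have shi := Finset.sum_le_sum hi'
    have c1 : ∑ i ∈ Finset.range k, 1 = k := by simp
    have c2 : ∑ z ∈ St, 2 = 2 * St.card := by simp [mul_comm]
    omega
  exact (h.shift c).base hD hcard hcS

end

/-! ### Part 5: the point set -/

/-- The regular polygon facts. -/
structure VV (k : ℕ) (v : ℕ → Pt) (γ : ℝ) : Prop where
  hk : 4 ≤ k
  hγ : 0 < γ
  per : ∀ j, v (j + k) = v j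
  bv : ∀ i j, i + 1 < j → j < i + k → γ ≤ bb v i (v j)
  b0 : ∀ i, γ ≤ det2 (v i) (v (i + 1))
  norm : ∀ j, ‖v j‖ ≤ 1
  pos : ∀ a b c, a < b → b < c → c < a + k → 0 < det3 (v a) (v b) (v c)

lemma abs_det2_le (a b : Pt) : |det2 a b| ≤ 2 * ‖a‖ * ‖b‖ := by
  have a1 : |a.1| ≤ ‖a‖ := norm_fst_le a
  have a2 : |a.2| ≤ ‖a‖ := norm_snd_le a
  have b1 : |b.1| ≤ ‖b‖ := norm_fst_le b
  have b2 : |b.2| ≤ ‖b‖ := norm_snd_le b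
  unfold det2
  calc |a.1 * b.2 - a.2 * b.1| ≤ |a.1 * b.2| + |a.2 * b.1| := abs_sub _ _
    _ = |a.1| * |b.2| + |a.2| * |b.1| := by rw [abs_mul, abs_mul]
    _ ≤ ‖a‖ * ‖b‖ + ‖a‖ * ‖b‖ := by gcongr
    _ = 2 * ‖a‖ * ‖b‖ := by ring

lemma fin_exists {ι : Type*} (s : Finset ι) (Q : ι → ℝ → Prop)
    (mono : ∀ i r r', r' ≤ r → Q i r → Q i r') (h : ∀ i ∈ s, ∃ r > 0, Q i r) :
    ∃ r > 0, ∀ i ∈ s, Q i r := by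
  classical
  induction s using Finset.induction_on with
  | empty => exact ⟨1, one_pos, by simp⟩
  | insert a s _ ih =>
    obtain ⟨r, hr, h1⟩ := ih (fun i hi => h i (Finset.mem_insert_of_mem hi))
    obtain ⟨r', hr', h2⟩ := h a (Finset.mem_insert_self _ _)
    refine ⟨min r r', lt_min hr hr', ?_⟩
    intro i hi
    rcases Finset.mem_insert.1 hi with rfl | hi
    · exact mono _ _ _ (min_le_right _ _) h2
    · exact mono _ _ _ (min_le_left _ _) (h1 i hi)

lemma det3_open {X Y Z : Pt} (h : 0 < det3 X Y Z) : ∃ r > 0, ∀ x y z : Pt, dist x X ≤ r →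
    dist y Y ≤ r → dist z Z ≤ r → 0 < det3 x y z := by
  have hc : Continuous (fun q : Pt × Pt × Pt => det3 q.1 q.2.1 q.2.2) := by
    simp only [det3_eq]; fun_prop
  have hev := (hc.tendsto (X, Y, Z)).eventually (lt_mem_nhds
    (show (0 : ℝ) < (fun q : Pt × Pt × Pt => det3 q.1 q.2.1 q.2.2) (X, Y, Z) from h))
  obtain ⟨δ, hδ, hb⟩ := Metric.eventually_nhds_iff.1 hev
  refine ⟨δ / 2, by linarith, ?_⟩
  intro x y z hx hy hz
  refine @hb (x, y, z) ?_
  have hxd : dist x X < δ := by linarith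
  have hyd : dist y Y < δ := by linarith
  have hzd : dist z Z < δ := by linarith
  exact max_lt hxd (max_lt hyd hzd)

lemma det3_mid3 (A A' B B' D D' : Pt) : det3 (mid A A') (mid B B') (mid D D') =
    (det3 A B D + det3 A B D' + det3 A B' D + det3 A B' D' + det3 A' B D + det3 A' B D' +
      det3 A' B' D + det3 A' B' D') / 8 := by
  simp only [det3_eq, mid, Prod.fst_add, Prod.snd_add, Prod.smul_fst, Prod.smul_snd, smul_eq_mul]
  ring

section
variable {k : ℕ} {v : ℕ → Pt} {γ : ℝ}

lemma VV.weak (h : VV k v γ) (a b c : ℕ) (h1 : a ≤ b) (h2 : b ≤ c) (h3 : c ≤ a + k) :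
    0 ≤ det3 (v a) (v b) (v c) := by
  by_cases e1 : a = b
  · rw [e1]; simp only [det3_eq]; apply le_of_eq; ring
  by_cases e2 : b = c
  · rw [e2, det3_self_right]
  by_cases e3 : c = a + k
  · rw [e3, h.per, det3_self_left]
  exact (h.pos a b c (by omega) (by omega) (by omega)).le

lemma VV.limit (h : VV k v γ) (c a b d : ℕ) (hab : a < b) (hbd : b < d) (hd : d < 2 * k)
    (hex : ¬ Exc (2 * k) a b d) :
    0 < det3 (mid (v (c + (a + 1) / 2)) (v (c + (a + 2) / 2)))
      (mid (v (c + (b + 1) / 2)) (v (c + (b + 2) / 2)))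
      (mid (v (c + (d + 1) / 2)) (v (c + (d + 2) / 2))) := by
  rw [det3_mid3]
  have hk := h.hk
  have g1 := h.weak (c + (a + 1) / 2) (c + (b + 1) / 2) (c + (d + 1) / 2) (by omega) (by omega) (by omega)
  have g2 := h.weak (c + (a + 1) / 2) (c + (b + 1) / 2) (c + (d + 2) / 2) (by omega) (by omega) (by omega)
  have g3 := h.weak (c + (a + 1) / 2) (c + (b + 2) / 2) (c + (d + 1) / 2) (by omega) (by omega) (by omega)
  have g4 := h.weak (c + (a + 1) / 2) (c + (b + 2) / 2) (c + (d + 2) / 2) (by omega) (by omega) (by omega)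
  have g5 := h.weak (c + (a + 2) / 2) (c + (b + 1) / 2) (c + (d + 1) / 2) (by omega) (by omega) (by omega)
  have g6 := h.weak (c + (a + 2) / 2) (c + (b + 1) / 2) (c + (d + 2) / 2) (by omega) (by omega) (by omega)
  have g7 := h.weak (c + (a + 2) / 2) (c + (b + 2) / 2) (c + (d + 1) / 2) (by omega) (by omega) (by omega)
  have g8 := h.weak (c + (a + 2) / 2) (c + (b + 2) / 2) (c + (d + 2) / 2) (by omega) (by omega) (by omega)
  have fin : ∀ α β δ : ℕ, (α = (a + 1) / 2 ∨ α = (a + 2) / 2) → (β = (b + 1) / 2 ∨ β = (b + 2) / 2) →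
      (δ = (d + 1) / 2 ∨ δ = (d + 2) / 2) → α < β → β < δ → δ < α + k →
      0 < (det3 (v (c + (a + 1) / 2)) (v (c + (b + 1) / 2)) (v (c + (d + 1) / 2)) +
        det3 (v (c + (a + 1) / 2)) (v (c + (b + 1) / 2)) (v (c + (d + 2) / 2)) +
        det3 (v (c + (a + 1) / 2)) (v (c + (b + 2) / 2)) (v (c + (d + 1) / 2)) +
        det3 (v (c + (a + 1) / 2)) (v (c + (b + 2) / 2)) (v (c + (d + 2) / 2)) +
        det3 (v (c + (a + 2) / 2)) (v (c + (b + 1) / 2)) (v (c + (d + 1) / 2)) +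
        det3 (v (c + (a + 2) / 2)) (v (c + (b + 1) / 2)) (v (c + (d + 2) / 2)) +
        det3 (v (c + (a + 2) / 2)) (v (c + (b + 2) / 2)) (v (c + (d + 1) / 2)) +
        det3 (v (c + (a + 2) / 2)) (v (c + (b + 2) / 2)) (v (c + (d + 2) / 2))) / 8 := by
    intro α β δ hα hβ hδ o1 o2 o3
    have := h.pos (c + α) (c + β) (c + δ) (by omega) (by omega) (by omega)
    rcases hα with rfl | rfl <;> rcases hβ with rfl | rfl <;> rcases hδ with rfl | rfl <;> linarith
  unfold Exc at hex
  by_cases c1 : (a + 1) / 2 < (b + 2) / 2 ∧ (b + 2) / 2 < (d + 1) / 2 ∧ (d + 1) / 2 < (a + 1) / 2 + k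
  · exact fin _ _ _ (Or.inl rfl) (Or.inr rfl) (Or.inl rfl) c1.1 c1.2.1 c1.2.2
  by_cases c2 : (a + 1) / 2 < (b + 2) / 2 ∧ (b + 2) / 2 < (d + 2) / 2 ∧ (d + 2) / 2 < (a + 1) / 2 + k
  · exact fin _ _ _ (Or.inl rfl) (Or.inr rfl) (Or.inr rfl) c2.1 c2.2.1 c2.2.2
  by_cases c3 : (a + 1) / 2 < (b + 1) / 2 ∧ (b + 1) / 2 < (d + 1) / 2 ∧ (d + 1) / 2 < (a + 1) / 2 + k
  · exact fin _ _ _ (Or.inl rfl) (Or.inl rfl) (Or.inl rfl) c3.1 c3.2.1 c3.2.2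
  by_cases c4 : (a + 1) / 2 < (b + 1) / 2 ∧ (b + 1) / 2 < (d + 2) / 2 ∧ (d + 2) / 2 < (a + 1) / 2 + k
  · exact fin _ _ _ (Or.inl rfl) (Or.inl rfl) (Or.inr rfl) c4.1 c4.2.1 c4.2.2
  by_cases c5 : (a + 2) / 2 < (b + 2) / 2 ∧ (b + 2) / 2 < (d + 2) / 2 ∧ (d + 2) / 2 < (a + 2) / 2 + k
  · exact fin _ _ _ (Or.inr rfl) (Or.inr rfl) (Or.inr rfl) c5.1 c5.2.1 c5.2.2
  by_cases c6 : (a + 2) / 2 < (b + 1) / 2 ∧ (b + 1) / 2 < (d + 2) / 2 ∧ (d + 2) / 2 < (a + 2) / 2 + k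
  · exact fin _ _ _ (Or.inr rfl) (Or.inl rfl) (Or.inr rfl) c6.1 c6.2.1 c6.2.2
  by_cases c7 : (a + 2) / 2 < (b + 2) / 2 ∧ (b + 2) / 2 < (d + 1) / 2 ∧ (d + 1) / 2 < (a + 2) / 2 + k
  · exact fin _ _ _ (Or.inr rfl) (Or.inr rfl) (Or.inl rfl) c7.1 c7.2.1 c7.2.2
  by_cases c8 : (a + 2) / 2 < (b + 1) / 2 ∧ (b + 1) / 2 < (d + 1) / 2 ∧ (d + 1) / 2 < (a + 2) / 2 + k
  · exact fin _ _ _ (Or.inr rfl) (Or.inl rfl) (Or.inl rfl) c8.1 c8.2.1 c8.2.2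
  exfalso
  omega

lemma VV.exists_rho (h : VV k v γ) : ∃ ρ > 0, ∀ c a b d, a < b → b < d → d < 2 * k →
    ¬ Exc (2 * k) a b d → ∀ x y z : Pt,
    dist x (mid (v (c + (a + 1) / 2)) (v (c + (a + 2) / 2))) ≤ ρ →
    dist y (mid (v (c + (b + 1) / 2)) (v (c + (b + 2) / 2))) ≤ ρ →
    dist z (mid (v (c + (d + 1) / 2)) (v (c + (d + 2) / 2))) ≤ ρ → 0 < det3 x y z := by
  have hk := h.hk
  obtain ⟨ρ, hρ, hh⟩ := fin_exists
    (Finset.range k ×ˢ Finset.range (2 * k) ×ˢ Finset.range (2 * k) ×ˢ Finset.range (2 * k))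
    (fun q ρ => q.2.1 < q.2.2.1 → q.2.2.1 < q.2.2.2 → ¬ Exc (2 * k) q.2.1 q.2.2.1 q.2.2.2 →
      ∀ x y z : Pt,
      dist x (mid (v (q.1 + (q.2.1 + 1) / 2)) (v (q.1 + (q.2.1 + 2) / 2))) ≤ ρ →
      dist y (mid (v (q.1 + (q.2.2.1 + 1) / 2)) (v (q.1 + (q.2.2.1 + 2) / 2))) ≤ ρ →
      dist z (mid (v (q.1 + (q.2.2.2 + 1) / 2)) (v (q.1 + (q.2.2.2 + 2) / 2))) ≤ ρ → 0 < det3 x y z)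
    (by
      intro q r r' hr hQ h1 h2 h3 x y z hx hy hz
      exact hQ h1 h2 h3 x y z (hx.trans hr) (hy.trans hr) (hz.trans hr))
    (by
      rintro ⟨c, a, b, d⟩ hq
      simp only [Finset.mem_product, Finset.mem_range] at hq
      by_cases hc : a < b ∧ b < d ∧ ¬ Exc (2 * k) a b d
      · obtain ⟨r, hr, hr2⟩ := det3_open (h.limit c a b d hc.1 hc.2.1 hq.2.2.2 hc.2.2)
        exact ⟨r, hr, fun _ _ _ => hr2⟩
      · exact ⟨1, one_pos, fun h1 h2 h3 => absurd ⟨h1, h2, h3⟩ hc⟩)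
  refine ⟨ρ, hρ, ?_⟩
  intro c a b d hab hbd hd hex x y z hx hy hz
  have hmod : ∀ t, v (c + t) = v (c % k + t) := fun t =>
    per_mod (f := fun c => v (c + t)) (fun j => by rw [add_right_comm]; exact h.per _) c
  rw [hmod, hmod ((a + 2) / 2)] at hx
  rw [hmod, hmod ((b + 2) / 2)] at hy
  rw [hmod, hmod ((d + 2) / 2)] at hz
  exact hh (c % k, a, b, d) (by
    simp only [Finset.mem_product, Finset.mem_range]
    exact ⟨Nat.mod_lt _ (by omega), by omega, by omega, hd⟩) hab hbd hex x y z hx hy hz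

lemma on_line {A B z : Pt} (hne : det2 A B ≠ 0) (hz : det3 A B z = 0) :
    ∃ t : ℝ, z = (1 - t) • A + t • B := by
  refine ⟨det2 A z / det2 A B, ?_⟩
  have e1 : det2 A B * (1 - det2 A z / det2 A B) = det2 A B - det2 A z := by
    field_simp
  have e2 : det2 A B * (det2 A z / det2 A B) = det2 A z := by
    field_simp
  have e3 : det2 A B - det2 A z = det2 z B := by
    simp only [det3_eq, det2] at *; linarith
  ext
  · apply mul_left_cancel₀ hne
    simp only [Prod.fst_add, Prod.smul_fst, smul_eq_mul]
    rw [mul_add, ← mul_assoc, ← mul_assoc, e1, e2, e3]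
    simp only [det2]; ring
  · apply mul_left_cancel₀ hne
    simp only [Prod.snd_add, Prod.smul_snd, smul_eq_mul]
    rw [mul_add, ← mul_assoc, ← mul_assoc, e1, e2, e3]
    simp only [det2]; ring

lemma VV.setup (h : VV k v γ) : ∃ (P : Finset Pt) (p : ℕ → Pt) (ρ η ε : ℝ),
    Setup k P v p ρ η ε := by
  classical
  have hk := h.hk
  have hγ := h.hγ
  obtain ⟨ρ0, hρ0, hori⟩ := h.exists_rho
  obtain ⟨ρ, hρ, hρ1, hρ2⟩ : ∃ ρ : ℝ, 0 < ρ ∧ ρ ≤ ρ0 ∧ ρ ≤ γ / 8 :=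
    ⟨min ρ0 (γ / 8), lt_min hρ0 (by linarith), min_le_left _ _, min_le_right _ _⟩
  obtain ⟨η, hη, hη1, hη2⟩ : ∃ η : ℝ, 0 < η ∧ η < γ / 4 ∧ η ≤ ρ * γ / 8 :=
    ⟨min (γ / 8) (ρ * γ / 8), lt_min (by linarith) (by positivity),
      lt_of_le_of_lt (min_le_left _ _) (by linarith), min_le_right _ _⟩
  obtain ⟨ε, hε, hε1, hε2, hε3⟩ : ∃ ε : ℝ, 0 < ε ∧ ε ≤ ρ ∧ ε < 1 ∧ 4 * ε < γ * η / 8 := by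
    refine ⟨min ρ (min (1 / 2) (γ * η / 64)), lt_min hρ (lt_min (by norm_num) (by positivity)),
      min_le_left _ _, ?_, ?_⟩
    · exact lt_of_le_of_lt ((min_le_right _ _).trans (min_le_left _ _)) (by norm_num)
    · have : min ρ (min (1 / 2) (γ * η / 64)) ≤ γ * η / 64 :=
        (min_le_right _ _).trans (min_le_right _ _)
      have : 0 < γ * η := by positivity
      linarith
  let p : ℕ → Pt := fun j => (1 - ε) • mid (v j) (v (j + 1))
  let P : Finset Pt := (Finset.range k).image v ∪ (Finset.range k).image p
  have perp : ∀ j, p (j + k) = p j := by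
    intro j
    simp only [p]
    rw [h.per, show j + k + 1 = j + 1 + k by ring, h.per]
  have memP : ∀ z, z ∈ P ↔ ∃ j, z = v j ∨ z = p j := by
    intro z
    simp only [P, Finset.mem_union, Finset.mem_image, Finset.mem_range]
    constructor
    · rintro (⟨j, -, rfl⟩ | ⟨j, -, rfl⟩)
      · exact ⟨j, Or.inl rfl⟩
      · exact ⟨j, Or.inr rfl⟩
    · rintro ⟨j, rfl | rfl⟩
      · exact Or.inl ⟨j % k, Nat.mod_lt _ (by omega), (per_mod h.per j).symm⟩
      · exact Or.inr ⟨j % k, Nat.mod_lt _ (by omega), (per_mod perp j).symm⟩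
  have rep : ∀ z ∈ P, ∀ i, ∃ j, i ≤ j ∧ j < i + k ∧ (z = v j ∨ z = p j) := by
    intro z hz i
    obtain ⟨j, hj⟩ := (memP z).1 hz
    have key : ∃ j', i ≤ j' ∧ j' < i + k ∧ j' % k = j % k := by
      refine ⟨i + (j + i * (k - 1)) % k, by omega,
        by have := Nat.mod_lt (j + i * (k - 1)) (show k > 0 by omega); omega, ?_⟩
      rw [Nat.add_mod_mod]
      have : i + (j + i * (k - 1)) = j + k * i := by
        obtain ⟨k', rfl⟩ : ∃ k', k = k' + 1 := ⟨k - 1, by omega⟩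
        simp; ring
      rw [this, Nat.add_mul_mod_self_left]
    obtain ⟨j', h1, h2, h3⟩ := key
    refine ⟨j', h1, h2, ?_⟩
    rw [per_mod h.per j', per_mod perp j', h3, ← per_mod h.per j, ← per_mod perp j]
    exact hj
  have bper : ∀ i z, bb v (i + k) z = bb v i z := by
    intro i z
    unfold bb
    rw [show i + k + 1 = i + 1 + k by ring, h.per, h.per]
  have bpe : ∀ i j, bb v i (p j) = (1 - ε) * ((bb v i (v j) + bb v i (v (j + 1))) / 2) +
      ε * det2 (v i) (v (i + 1)) := by
    intro i j
    simp only [p, bb, det3_eq, det2, mid, Prod.fst_add, Prod.snd_add, Prod.smul_fst, Prod.smul_snd,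
      smul_eq_mul]
    ring
  have bi0 : ∀ i, bb v i (v i) = 0 := fun i => det3_self_left _ _
  have bi1 : ∀ i, bb v i (v (i + 1)) = 0 := fun i => det3_self_right _ _
  have bp0 : ∀ i, 0 < bb v i (p i) := by
    intro i
    rw [bpe, bi0, bi1]
    have := mul_pos hε (lt_of_lt_of_le hγ (h.b0 i))
    linarith
  have bp' : ∀ i j, i < j → j < i + k → γ / 2 ≤ bb v i (p j) := by
    intro i j h1 h2
    have hs : γ ≤ bb v i (v j) + bb v i (v (j + 1)) := by
      by_cases e1 : j = i + 1
      · rw [e1, bi1]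
        have := h.bv i (i + 1 + 1) (by omega) (by omega)
        linarith
      · have g1 := h.bv i j (by omega) h2
        by_cases e2 : j + 1 = i + k
        · rw [e2, h.per, bi0]; linarith
        · have g2 := h.bv i (j + 1) (by omega) (by omega)
          linarith
    rw [bpe]
    have h3 := mul_le_mul_of_nonneg_left hs (show 0 ≤ 1 - ε by linarith)
    have h4 := mul_le_mul_of_nonneg_left (h.b0 i) hε.le
    nlinarith
  have low : ∀ z ∈ P, ∀ i, z = v i ∨ z = v (i + 1) ∨ z = p i ∨ γ / 2 ≤ bb v i z := by
    intro z hz i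
    obtain ⟨j, h1, h2, h3⟩ := rep z hz i
    rcases h3 with rfl | rfl
    · by_cases e1 : j = i
      · left; rw [e1]
      by_cases e2 : j = i + 1
      · right; left; rw [e2]
      · have := h.bv i j (by omega) h2
        right; right; right; linarith
    · by_cases e1 : j = i
      · right; right; left; rw [e1]
      · right; right; right; exact bp' i j (by omega) h2
  have bP : ∀ i, ∀ z ∈ P, 0 ≤ bb v i z := by
    intro i z hz
    rcases low z hz i with rfl | rfl | rfl | hh
    · rw [bi0]
    · rw [bi1]
    · exact (bp0 i).le
    · linarith
  have bnn : ∀ i, ∀ z ∈ convexHull ℝ (P : Set Pt), 0 ≤ bb v i z := fun i => conv_hp (bP i)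
  have midn : ∀ j, ‖mid (v j) (v (j + 1))‖ ≤ 1 := by
    intro j
    have h1 := h.norm j
    have h2 := h.norm (j + 1)
    unfold mid
    calc _ ≤ ‖(1 / 2 : ℝ) • v j‖ + ‖(1 / 2 : ℝ) • v (j + 1)‖ := norm_add_le _ _
      _ = (1 / 2) * ‖v j‖ + (1 / 2) * ‖v (j + 1)‖ := by
        rw [norm_smul, norm_smul]; norm_num
      _ ≤ 1 := by linarith
  have pn : ∀ j, ‖p j‖ ≤ 1 := by
    intro j
    simp only [p]
    rw [norm_smul, Real.norm_of_nonneg (by linarith)]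
    have := midn j
    nlinarith [norm_nonneg (mid (v j) (v (j + 1)))]
  have Pn : ∀ z ∈ P, ‖z‖ ≤ 1 := by
    intro z hz
    obtain ⟨j, rfl | rfl⟩ := (memP z).1 hz
    · exact h.norm j
    · exact pn j
  have hulln : ∀ z ∈ convexHull ℝ (P : Set Pt), ‖z‖ ≤ 1 := by
    intro z hz
    have := convexHull_min (s := (P : Set Pt)) (t := Metric.closedBall 0 1)
      (fun u hu => by simpa using Pn u hu) (convex_closedBall 0 1) hz
    simpa using this
  have vk : ∀ i, v i = v (i + k) := fun i => (h.per i).symm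
  have pk : ∀ i, p i = p (i + k) := fun i => (perp i).symm
  -- closeness to a common vertex
  have adjc : ∀ i, ∀ z ∈ convexHull ℝ (P : Set Pt), bb v i z ≤ η → bb v (i + 1) z ≤ η →
      dist z (v (i + 1)) ≤ ρ := by
    intro i z hz b1 b2
    have hconv : Convex ℝ {z : Pt | ‖z - v (i + 1)‖ ≤ 4 / γ * (bb v i z + bb v (i + 1) z)} := by
      intro x hx y hy s t hs ht hst
      change ‖_ - _‖ ≤ _
      have hx' : ‖x - v (i + 1)‖ ≤ 4 / γ * (bb v i x + bb v (i + 1) x) := hx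
      have hy' : ‖y - v (i + 1)‖ ≤ 4 / γ * (bb v i y + bb v (i + 1) y) := hy
      have e : s • x + t • y - v (i + 1) = s • (x - v (i + 1)) + t • (y - v (i + 1)) := by
        rw [smul_sub, smul_sub]
        have : v (i + 1) = s • v (i + 1) + t • v (i + 1) := by rw [← add_smul, hst, one_smul]
        nth_rewrite 1 [this]
        abel
      rw [e]
      unfold bb at *
      rw [det3_comb _ _ _ _ _ _ hst, det3_comb _ _ _ _ _ _ hst]
      calc _ ≤ ‖s • (x - v (i + 1))‖ + ‖t • (y - v (i + 1))‖ := norm_add_le _ _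
        _ = s * ‖x - v (i + 1)‖ + t * ‖y - v (i + 1)‖ := by
          rw [norm_smul, norm_smul, Real.norm_of_nonneg hs, Real.norm_of_nonneg ht]
        _ ≤ s * (4 / γ * (det3 (v i) (v (i + 1)) x + det3 (v (i + 1)) (v (i + 1 + 1)) x)) +
            t * (4 / γ * (det3 (v i) (v (i + 1)) y + det3 (v (i + 1)) (v (i + 1 + 1)) y)) := by
          gcongr
        _ = _ := by ring
    have hsub : (P : Set Pt) ⊆ {z : Pt | ‖z - v (i + 1)‖ ≤ 4 / γ * (bb v i z + bb v (i + 1) z)} := by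
      intro w hw
      change ‖_‖ ≤ _
      by_cases hwv : w = v (i + 1)
      · rw [hwv, bi1, bi0]; simp
      have hsum : γ / 2 ≤ bb v i w + bb v (i + 1) w := by
        have n1 := bP i w hw
        have n2 := bP (i + 1) w hw
        rcases low w hw i with e | e | e | e
        · have := h.bv (i + 1) (i + k) (by omega) (by omega)
          rw [← vk, ← e] at this; linarith
        · exact absurd e hwv
        · have := bp' (i + 1) (i + k) (by omega) (by omega)
          rw [← pk, ← e] at this; linarith
        · linarith
      have h1 : ‖w - v (i + 1)‖ ≤ 2 := by
        have := norm_sub_le w (v (i + 1))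
        linarith [Pn w hw, h.norm (i + 1)]
      have h2 : 4 / γ * (γ / 2) ≤ 4 / γ * (bb v i w + bb v (i + 1) w) := by gcongr
      have h3 : 4 / γ * (γ / 2) = 2 := by field_simp; norm_num
      linarith
    have hfin : ‖z - v (i + 1)‖ ≤ 4 / γ * (bb v i z + bb v (i + 1) z) :=
      convexHull_min hsub hconv hz
    rw [dist_eq_norm]
    have h4 : 4 / γ * (bb v i z + bb v (i + 1) z) ≤ 4 / γ * (2 * (ρ * γ / 8)) := by
      gcongr; linarith
    have h5 : 4 / γ * (2 * (ρ * γ / 8)) = ρ := by field_simp; norm_num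
    linarith
  have close : ∀ i j, i < j → j < i + k → ∀ z ∈ convexHull ℝ (P : Set Pt), bb v i z ≤ η →
      bb v j z ≤ η → (j = i + 1 ∧ dist z (v j) ≤ ρ) ∨ (j + 1 = i + k ∧ dist z (v i) ≤ ρ) := by
    intro i j h1 h2 z hz b1 b2
    by_cases e1 : j = i + 1
    · left; subst e1; exact ⟨rfl, adjc i z hz b1 b2⟩
    by_cases e2 : j + 1 = i + k
    · right
      refine ⟨e2, ?_⟩
      have := adjc j z hz b2 (by rw [e2, bper]; exact b1)
      rw [e2, h.per] at this
      exact this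
    exfalso
    have hconv : Convex ℝ {z : Pt | γ / 2 ≤ bb v i z + bb v j z} := by
      intro x hx y hy s t hs ht hst
      change γ / 2 ≤ _
      have hx' : γ / 2 ≤ bb v i x + bb v j x := hx
      have hy' : γ / 2 ≤ bb v i y + bb v j y := hy
      unfold bb at *
      rw [det3_comb _ _ _ _ _ _ hst, det3_comb _ _ _ _ _ _ hst]
      have g1 := mul_le_mul_of_nonneg_left hx' hs
      have g2 := mul_le_mul_of_nonneg_left hy' ht
      have g3 : γ / 2 = s * (γ / 2) + t * (γ / 2) := by rw [← add_mul, hst, one_mul]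
      linarith
    have hsub : (P : Set Pt) ⊆ {z : Pt | γ / 2 ≤ bb v i z + bb v j z} := by
      intro w hw
      change γ / 2 ≤ _
      have n1 := bP i w hw
      have n2 := bP j w hw
      rcases low w hw i with e | e | e | e
      · have := h.bv j (i + k) (by omega) (by omega)
        rw [← vk, ← e] at this; linarith
      · have := h.bv j (i + 1 + k) (by omega) (by omega)
        rw [← vk, ← e] at this; linarith
      · have := bp' j (i + k) (by omega) (by omega)
        rw [← pk, ← e] at this; linarith
      · linarith
    have hfin : γ / 2 ≤ bb v i z + bb v j z := convexHull_min hsub hconv hz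
    linarith
  have tdiff : ∀ i (z w : Pt), dist z w ≤ ρ → |tau v i z - tau v i w| ≤ γ / 4 := by
    intro i z w hd
    have e : tau v i z - tau v i w = det2 (mid (v i) (v (i + 1))) (z - w) := by
      simp only [tau, det2, Prod.fst_sub, Prod.snd_sub]; ring
    rw [e]
    have h1 := abs_det2_le (mid (v i) (v (i + 1))) (z - w)
    rw [dist_eq_norm] at hd
    have h2 : 2 * ‖mid (v i) (v (i + 1))‖ * ‖z - w‖ ≤ 2 * 1 * ρ := by
      gcongr; exact midn i
    linarith
  have tl' : ∀ i z, dist z (v i) ≤ ρ → tau v i z ≤ - (γ / 4) := by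
    intro i z hd
    have h1 := abs_le.1 (tdiff i z _ hd)
    have h2 : tau v i (v i) = - (det2 (v i) (v (i + 1)) / 2) := by
      simp only [tau, det2, mid, Prod.fst_add, Prod.snd_add, Prod.smul_fst, Prod.smul_snd,
        smul_eq_mul]; ring
    have := h.b0 i
    linarith [h1.2]
  have tr' : ∀ i z, dist z (v (i + 1)) ≤ ρ → γ / 4 ≤ tau v i z := by
    intro i z hd
    have h1 := abs_le.1 (tdiff i z _ hd)
    have h2 : tau v i (v (i + 1)) = (det2 (v i) (v (i + 1)) / 2) := by
      simp only [tau, det2, mid, Prod.fst_add, Prod.snd_add, Prod.smul_fst, Prod.smul_snd,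
        smul_eq_mul]; ring
    have := h.b0 i
    linarith [h1.1]
  refine ⟨P, p, ρ, η, ε, ?_⟩
  refine { hk := hk, hρ := hρ.le, hη := hη.le, hε := hε, perv := h.per, perp := perp, memP := memP,
           pdef := fun j => rfl, pnear := ?_, bnn := bnn, bp0 := bp0,
           bp := fun i j h1 h2 => by linarith [bp' i j h1 h2],
           bv := fun i j h1 h2 => by linarith [h.bv i j h1 h2], close := close,
           tl := fun i z hz => by linarith [tl' i z hz],
           tr := fun i z hz => by linarith [tr' i z hz], trap := ?_, ori := ?_ }
  · intro j
    rw [dist_eq_norm]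
    have e : p j - mid (v j) (v (j + 1)) = (-ε) • mid (v j) (v (j + 1)) := by
      simp only [p]; rw [sub_smul, one_smul, neg_smul]; abel
    rw [e, norm_smul, norm_neg, Real.norm_of_nonneg hε.le]
    have := midn j
    nlinarith
  · intro i l r c hl hr hc dl dr bl br hbc
    have tl1 := tl' i l dl
    have tr1 := tr' i r dr
    have hβ := h.b0 i
    have hβ2 : det2 (v i) (v (i + 1)) ≤ 2 := by
      have h1 := le_abs_self (det2 (v i) (v (i + 1)))
      have h2 := abs_det2_le (v i) (v (i + 1))
      have h3 : 2 * ‖v i‖ * ‖v (i + 1)‖ ≤ 2 * 1 * 1 := by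
        gcongr
        · exact h.norm i
        · exact h.norm (i + 1)
      linarith
    have hpp : ∀ a b : Pt, a ∈ convexHull ℝ (P : Set Pt) → b ∈ convexHull ℝ (P : Set Pt) →
        det3 a b (mid (v i) (v (i + 1))) - 4 * ε ≤ det3 a b (p i) := by
      intro a b ha hb
      have e : det3 a b (p i) = det3 a b (mid (v i) (v (i + 1))) -
          ε * det2 (b - a) (mid (v i) (v (i + 1))) := by
        simp only [p, det3_eq, det2, Prod.fst_sub, Prod.snd_sub, Prod.smul_fst, Prod.smul_snd,
          smul_eq_mul]
        ring
      have h1 := le_abs_self (det2 (b - a) (mid (v i) (v (i + 1))))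
      have h2 := abs_det2_le (b - a) (mid (v i) (v (i + 1)))
      have hba : ‖b - a‖ ≤ 2 := by
        have := norm_sub_le b a
        linarith [hulln a ha, hulln b hb]
      have h3 : 2 * ‖b - a‖ * ‖mid (v i) (v (i + 1))‖ ≤ 2 * 2 * 1 := by
        gcongr; exact midn i
      have h4 : ε * det2 (b - a) (mid (v i) (v (i + 1))) ≤ ε * 4 := by
        gcongr; linarith
      linarith
    have hlr := hpp r c hr hc
    have hcl := hpp c l hc hl
    have hbp := bp0 i
    obtain ⟨s, hs⟩ := on_line (by linarith) bl
    obtain ⟨t, ht⟩ := on_line (by linarith) br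
    have el : tau v i l = det2 (v i) (v (i + 1)) * (s - 1 / 2) := by
      rw [hs]
      simp only [tau, det2, mid, Prod.fst_add, Prod.snd_add, Prod.smul_fst, Prod.smul_snd,
        smul_eq_mul]; ring
    have er : tau v i r = det2 (v i) (v (i + 1)) * (t - 1 / 2) := by
      rw [ht]
      simp only [tau, det2, mid, Prod.fst_add, Prod.snd_add, Prod.smul_fst, Prod.smul_snd,
        smul_eq_mul]; ring
    have hs1 : γ / 8 ≤ 1 / 2 - s := by
      by_contra hcon
      push Not at hcon
      nlinarith
    have ht1 : γ / 8 ≤ t - 1 / 2 := by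
      by_contra hcon
      push Not at hcon
      nlinarith
    have e1 : det3 l r (p i) = (t - s) * bb v i (p i) := by
      rw [hs, ht]
      simp only [bb, det3_eq, Prod.fst_add, Prod.snd_add, Prod.smul_fst, Prod.smul_snd,
        smul_eq_mul]; ring
    have e2 : det3 r c (mid (v i) (v (i + 1))) = (t - 1 / 2) * bb v i c := by
      rw [ht]
      simp only [bb, det3_eq, mid, Prod.fst_add, Prod.snd_add, Prod.smul_fst, Prod.smul_snd,
        smul_eq_mul]; ring
    have e3 : det3 c l (mid (v i) (v (i + 1))) = (1 / 2 - s) * bb v i c := by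
      rw [hs]
      simp only [bb, det3_eq, mid, Prod.fst_add, Prod.snd_add, Prod.smul_fst, Prod.smul_snd,
        smul_eq_mul]; ring
    have k1 : γ / 8 * η ≤ (t - 1 / 2) * bb v i c :=
      mul_le_mul ht1 hbc.le hη.le (by linarith)
    have k2 : γ / 8 * η ≤ (1 / 2 - s) * bb v i c :=
      mul_le_mul hs1 hbc.le hη.le (by linarith)
    refine ⟨?_, ?_, ?_⟩
    · rw [e1]; exact mul_pos (by linarith) hbp
    · linarith
    · linarith
  · intro c a b d h1 h2 h3 h4 x y z hx hy hz
    exact hori c a b d h1 h2 h3 h4 x y z (hx.trans hρ1) (hy.trans hρ1) (hz.trans hρ1)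

end

section
variable {k : ℕ} {P : Finset Pt} {v p : ℕ → Pt} {ρ η ε : ℝ}

lemma Setup.enum (h : Setup k P v p ρ η ε) : ∃ Y : ℕ → Pt,
    P = (Finset.range (2 * k)).image Y ∧ ∀ a b c, a < 2 * k → b < 2 * k → c < 2 * k →
      a ≠ b → a ≠ c → b ≠ c → det3 (Y a) (Y b) (Y c) ≠ 0 := by
  have hk := h.hk
  have hpk : p k = p 0 := by have := h.perp 0; rwa [zero_add] at this
  have hvk : v k = v 0 := by have := h.perv 0; rwa [zero_add] at this
  let x : ℕ → Pt := fun t => if t % 2 = 0 then p (t / 2) else v ((t + 1) / 2)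
  have xe : ∀ j, x (2 * j) = p j := by
    intro j
    have : x (2 * j) = p (2 * j / 2) := if_pos (by omega)
    rw [this]; congr 1; omega
  have xo : ∀ j, x (2 * j + 1) = v (j + 1) := by
    intro j
    have : x (2 * j + 1) = v ((2 * j + 1 + 1) / 2) := if_neg (by omega)
    rw [this]; congr 1; omega
  have xnear : ∀ t, t < 2 * k → dist (x t) (mid (v (0 + (t + 1) / 2)) (v (0 + (t + 2) / 2))) ≤ ρ := by
    intro t ht
    obtain ⟨j, hj | hj⟩ : ∃ j, t = 2 * j ∨ t = 2 * j + 1 := ⟨t / 2, by omega⟩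
    · subst hj
      rw [xe, show 0 + (2 * j + 1) / 2 = j by omega, show 0 + (2 * j + 2) / 2 = j + 1 by omega]
      exact h.pnear j
    · subst hj
      rw [xo, show 0 + (2 * j + 1 + 1) / 2 = j + 1 by omega,
        show 0 + (2 * j + 1 + 2) / 2 = j + 1 by omega]
      have : mid (v (j + 1)) (v (j + 1)) = v (j + 1) := by
        simp only [mid]; rw [← add_smul]; norm_num
      rw [this]
      simpa using h.hρ
  have xlast : x (2 * k - 1) = v 0 := by
    have := xo (k - 1)
    rw [show 2 * (k - 1) + 1 = 2 * k - 1 by omega, show k - 1 + 1 = k by omega, hvk] at this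
    exact this
  have x0 : x 0 = p 0 := xe 0
  have x1 : x 1 = v 1 := xo 0
  refine ⟨x, ?_, ne_of_sorted ?_⟩
  · ext z
    simp only [Finset.mem_image, Finset.mem_range]
    constructor
    · intro hz
      obtain ⟨j, j1, j2, rfl | rfl⟩ := h.rep hz 1
      · refine ⟨2 * (j - 1) + 1, by omega, ?_⟩
        rw [xo, show j - 1 + 1 = j by omega]
      · by_cases hjk : j < k
        · exact ⟨2 * j, by omega, xe j⟩
        · have : j = k := by omega
          exact ⟨0, by omega, by rw [this, hpk, x0]⟩
    · rintro ⟨t, ht, rfl⟩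
      obtain ⟨j, hj | hj⟩ : ∃ j, t = 2 * j ∨ t = 2 * j + 1 := ⟨t / 2, by omega⟩
      · rw [hj, xe]; exact h.pP j
      · rw [hj, xo]; exact h.vP _
  · intro a b c hab hbc hc
    by_cases hex : Exc (2 * k) a b c
    · apply ne_of_lt
      rcases hex with ⟨e1, rfl, rfl⟩ | ⟨rfl, rfl, e⟩
      · obtain ⟨j, rfl⟩ : ∃ j, a = 2 * j + 1 := ⟨a / 2, by omega⟩
        rw [show 2 * j + 1 + 1 = 2 * (j + 1) by ring, show 2 * j + 1 + 2 = 2 * (j + 1) + 1 by ring,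
          xo, xe, xo, det3_flip]
        have := h.bp0 (j + 1)
        unfold bb at this
        linarith
      · have : c = 2 * k - 1 := by omega
        rw [this, xlast, x0, x1, det3_rev]
        have := h.bp0 0
        unfold bb at this
        rw [zero_add] at this
        linarith
    · exact (h.ori 0 a b c hab hbc hc hex _ _ _ (xnear a (by omega)) (xnear b (by omega))
        (xnear c hc)).ne'

end

/-- Vertices of the regular polygon. -/
noncomputable def rv (k : ℕ) (j : ℕ) : Pt :=
  (Real.cos (2 * (j * (Real.pi / k))), Real.sin (2 * (j * (Real.pi / k))))

lemma sin_three (x y : ℝ) : Real.sin (2 * x) + Real.sin (2 * y) - Real.sin (2 * (x + y)) =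
    4 * Real.sin x * Real.sin y * Real.sin (x + y) := by
  have hx := Real.sin_sq_add_cos_sq x
  have hy := Real.sin_sq_add_cos_sq y
  rw [Real.sin_two_mul, Real.sin_two_mul, Real.sin_two_mul, Real.sin_add, Real.cos_add]
  linear_combination (-2 * Real.sin y * Real.cos y) * hx + (-2 * Real.sin x * Real.cos x) * hy

lemma rv_det (k a b c : ℕ) : det3 (rv k a) (rv k b) (rv k c) =
    4 * Real.sin ((b - a : ℝ) * (Real.pi / k)) * Real.sin ((c - b : ℝ) * (Real.pi / k)) *
      Real.sin ((c - a : ℝ) * (Real.pi / k)) := by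
  have e : det3 (rv k a) (rv k b) (rv k c) =
      Real.sin (2 * ((b - a : ℝ) * (Real.pi / k))) + Real.sin (2 * ((c - b : ℝ) * (Real.pi / k)))
        - Real.sin (2 * ((c - a : ℝ) * (Real.pi / k))) := by
    simp only [det3_eq, rv, sub_mul, mul_sub, Real.sin_sub]
    ring
  rw [e, show (c - a : ℝ) * (Real.pi / k) =
    (b - a : ℝ) * (Real.pi / k) + (c - b : ℝ) * (Real.pi / k) by ring]
  exact sin_three _ _

lemma sin_pos_aux {k : ℕ} {t : ℝ} (hk : 0 < k) (h0 : 0 < t) (h1 : t < k) :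
    0 < Real.sin (t * (Real.pi / k)) := by
  have hk' : (0 : ℝ) < k := by exact_mod_cast hk
  apply Real.sin_pos_of_pos_of_lt_pi
  · have := Real.pi_pos; positivity
  · calc t * (Real.pi / k) < k * (Real.pi / k) := by
          have := Real.pi_pos
          gcongr
      _ = Real.pi := by field_simp

lemma rv_VV {k : ℕ} (hk : 4 ≤ k) : ∃ γ, VV k (rv k) γ := by
  have hk' : (0 : ℝ) < k := by exact_mod_cast (show 0 < k by omega)
  have pos : ∀ a b c, a < b → b < c → c < a + k → 0 < det3 (rv k a) (rv k b) (rv k c) := by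
    intro a b c h1 h2 h3
    rw [rv_det]
    have g1 : (a : ℝ) < b := by exact_mod_cast h1
    have g2 : (b : ℝ) < c := by exact_mod_cast h2
    have g3 : (c : ℝ) < a + k := by exact_mod_cast h3
    have s1 := sin_pos_aux (k := k) (t := b - a) (by omega) (by linarith) (by linarith)
    have s2 := sin_pos_aux (k := k) (t := c - b) (by omega) (by linarith) (by linarith)
    have s3 := sin_pos_aux (k := k) (t := c - a) (by omega) (by linarith) (by linarith)
    positivity
  have b0 : ∀ i, det2 (rv k i) (rv k (i + 1)) = Real.sin (2 * (Real.pi / k)) := by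
    intro i
    have : (2 * (Real.pi / k) : ℝ) =
        2 * (((i + 1 : ℕ) : ℝ) * (Real.pi / k)) - 2 * ((i : ℝ) * (Real.pi / k)) := by
      push_cast; ring
    rw [this, Real.sin_sub]
    simp only [det2, rv]
    ring
  have s0 : 0 < Real.sin (2 * (Real.pi / k)) :=
    sin_pos_aux (by omega) (by norm_num) (by exact_mod_cast (show 2 < k by omega))
  obtain ⟨γ, hγ, hg⟩ := fin_exists (Finset.range k)
    (fun d r => 1 < d → r ≤ det3 (rv k 0) (rv k 1) (rv k d))
    (fun i r r' h1 h2 h3 => h1.trans (h2 h3))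
    (by
      intro d hd
      rw [Finset.mem_range] at hd
      by_cases h1 : 1 < d
      · exact ⟨_, pos 0 1 d (by omega) h1 (by omega), fun _ => le_rfl⟩
      · exact ⟨1, one_pos, fun h => absurd h h1⟩)
  refine ⟨min γ (Real.sin (2 * (Real.pi / k))), ?_⟩
  refine { hk := hk, hγ := lt_min hγ s0, per := ?_, bv := ?_, b0 := ?_, norm := ?_, pos := pos }
  · intro j
    have e : (2 * (((j + k : ℕ) : ℝ) * (Real.pi / k)) : ℝ) =
        2 * ((j : ℝ) * (Real.pi / k)) + 2 * Real.pi := by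
      push_cast; field_simp
    simp only [rv]
    rw [e, Real.cos_add_two_pi, Real.sin_add_two_pi]
  · intro i j h1 h2
    obtain ⟨d, rfl⟩ : ∃ d, j = i + d := ⟨j - i, by omega⟩
    refine (min_le_left _ _).trans ((hg d (Finset.mem_range.2 (by omega)) (by omega)).trans ?_)
    apply le_of_eq
    unfold bb
    rw [rv_det, rv_det]
    push_cast
    congr 2 <;> [congr 2; skip; skip] <;> ring_nf
  · intro i
    rw [b0]; exact min_le_right _ _
  · intro j
    rw [Prod.norm_def]
    exact max_le (Real.abs_cos_le_one _) (Real.abs_sin_le_one _)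

theorem exists_pointset_needing_quarter_n_steiner_points :
    ∀ k : ℕ, 4 ≤ k →
      ∃ P : Finset Pt, P.card = 2 * k ∧
        (∀ p ∈ P, ∀ q ∈ P, ∀ r ∈ P, p ≠ q → p ≠ r → q ≠ r →
          det2 (q - p) (r - p) ≠ 0) ∧
        ∀ Q : ConvexQuadrangulation P,
          ((2 * k : ℝ) / 4) ≤ ((steinerPoints P Q).card : ℝ) := by
  intro k hk
  obtain ⟨γ, hV⟩ := rv_VV hk
  obtain ⟨P, p, ρ, η, ε, h⟩ := hV.setup
  obtain ⟨Y, hPY, hne⟩ := h.enum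
  have hinj := inj_of_ne (by omega) hne
  refine ⟨P, ?_, ?_, ?_⟩
  · rw [hPY, Finset.card_image_of_injOn, Finset.card_range]
    intro a ha b hb hab
    simp only [Finset.coe_range, Set.mem_Iio] at ha hb
    by_contra hcon
    exact hinj a b ha hb hcon hab
  · intro a ha b hb c hc h1 h2 h3
    rw [hPY] at ha hb hc
    simp only [Finset.mem_image, Finset.mem_range] at ha hb hc
    obtain ⟨i, hi, rfl⟩ := ha
    obtain ⟨j, hj, rfl⟩ := hb
    obtain ⟨l, hl, rfl⟩ := hc
    exact hne i j l hi hj hl (fun e => h1 (by rw [e])) (fun e => h2 (by rw [e]))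
      (fun e => h3 (by rw [e]))
  · intro Q
    obtain ⟨C, hC⟩ := exists_dec P Q
    have := h.bound hC
    have h2 : (k : ℝ) ≤ 2 * ((steinerPoints P Q).card : ℝ) := by exact_mod_cast this
    linarith
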